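/- arXiv:2410.08039 — 3 statements merged into one kernel-verified Lean document; each statement's English description precedes it below -/
import Mathlib

section
/- Let N ≥ 1, 1 < p ≤ q < ∞, and let g, h : ℝ^N → (0,∞) be measurable functions, positive almost everywhere, with g ∈ L¹(ℝ^N \ {0}) and h^{1−p'} ∈ L¹_loc(ℝ^N). Define G(x) = ∫_{ℝ^N \ B(0,|x|)} g(y) dy and H(x) = ∫_{B(0,|x|)} h(y)^{1−p'} dy. If D₁ := sup_{x ≠ 0} G(x)^{1/q} H(x)^{1/p'} < ∞, then for every measurable function f : ℝ^N → ℂ one has ( ∫_{ℝ^N} ( ∫_{B(0,|x|)} |f(y)| dy )^q g(x) dx )^{1/q} ≤ D₁ (p')^{1/p'} p^{1/q} ( ∫_{ℝ^N} |f(x)|^p h(x) dx )^{1/p}. -/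
open MeasureTheory Metric ENNReal

lemma aux_sublevel {α : Type*} [MeasurableSpace α] (μ : Measure α) (u : α → ℝ)
    (t : ℝ≥0∞) : μ {y | μ {z | u z ≤ u y} ≤ t} ≤ t := by
  set S := {y | μ {z | u z ≤ u y} ≤ t} with hS
  by_cases hm : ∃ m ∈ S, ∀ y ∈ S, u y ≤ u m
  · obtain ⟨m, hmS, hm⟩ := hm
    exact (measure_mono (fun y hy => hm y hy)).trans hmS
  · push Not at hm
    obtain ⟨T, hTS, hTc, hT⟩ := TopologicalSpace.isOpen_biUnion_countable S
      (fun y => Set.Iio (u y)) (fun _ _ => isOpen_Iio)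
    have hsub : S ⊆ ⋃ y ∈ T, {z | u z ≤ u y} := by
      intro z hz
      obtain ⟨y, hy, hzy⟩ := hm z hz
      have : u z ∈ ⋃ i ∈ S, Set.Iio (u i) := Set.mem_biUnion hy hzy
      rw [← hT] at this
      obtain ⟨w, hw, hzw⟩ := Set.mem_iUnion₂.1 this
      exact Set.mem_biUnion hw (show u z ≤ u w from le_of_lt hzw)
    refine (measure_mono hsub).trans ?_
    rw [measure_biUnion_eq_iSup hTc]
    · exact iSup₂_le fun i hi => hTS hi
    · intro i hi j hj
      rcases le_total (u i) (u j) with h | h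
      · exact ⟨j, hj, fun z hz => le_trans hz h, fun z hz => hz⟩
      · exact ⟨i, hi, fun z hz => hz, fun z hz => le_trans hz h⟩

lemma aux_meas {α : Type*} [MeasurableSpace α] (μ : Measure α) (u : α → ℝ) (hu : Measurable u) :
    Measurable (fun y => μ {z | u z ≤ u y}) := by
  have : Monotone (fun r : ℝ => μ {z | u z ≤ r}) :=
    fun r s h => measure_mono (fun z hz => le_trans hz h)
  exact this.measurable.comp hu

lemma aux_int {α : Type*} [MeasurableSpace α] (μ : Measure α) (u : α → ℝ) (hu : Measurable u)
    (a : ℝ) (ha : 0 < a) (ha1 : a < 1) (x : α) (hfin : μ {z | u z ≤ u x} ≠ ∞) :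
    ∫⁻ y in {z | u z ≤ u x}, (μ {z | u z ≤ u y}) ^ (-a) ∂μ
      ≤ ENNReal.ofReal (1 / (1 - a)) * (μ {z | u z ≤ u x}) ^ (1 - a) := by
  set S := {z | u z ≤ u x} with hS
  have hSm : MeasurableSet S := measurableSet_le hu measurable_const
  by_cases hM : μ S = 0
  · rw [Measure.restrict_eq_zero.2 hM]; simp
  set M := μ S with hMdef
  have hm : 0 < M.toReal := ENNReal.toReal_pos hM hfin
  set m := M.toReal with hmdef
  have hMm : M = ENNReal.ofReal m := (ENNReal.ofReal_toReal hfin).symm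
  set Φ := fun y => μ {z | u z ≤ u y} with hΦ
  have hΦm : Measurable Φ := aux_meas μ u hu
  have hΦ0 : ∀ᵐ y ∂μ, Φ y ≠ 0 := by
    rw [ae_iff]
    have := aux_sublevel μ u 0
    simpa [hΦ] using this
  have hΦle : ∀ y ∈ S, Φ y ≤ M := fun y hy => measure_mono (fun z (hz : u z ≤ u y) => show u z ≤ u x from le_trans hz hy)
  have h1 : ∫⁻ y in S, (Φ y) ^ (-a) ∂μ
      = ∫⁻ y in S, ENNReal.ofReal ((Φ y).toReal ^ (-a)) ∂μ := by
    apply lintegral_congr_ae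
    rw [Filter.EventuallyEq, ae_restrict_iff' hSm]
    filter_upwards [hΦ0] with y hy hyS
    have hyt : Φ y ≠ ∞ := ne_top_of_le_ne_top hfin (hΦle y hyS)
    rw [← ENNReal.ofReal_rpow_of_pos (ENNReal.toReal_pos hy hyt), ENNReal.ofReal_toReal hyt]
  have hfm : Measurable (fun y => (Φ y).toReal ^ (-a)) := hΦm.ennreal_toReal.pow_const _
  change ∫⁻ y in S, (Φ y) ^ (-a) ∂μ ≤ _
  rw [h1, lintegral_eq_lintegral_meas_lt _ (Filter.Eventually.of_forall fun y => by
    simp only [Pi.zero_apply]; positivity) hfm.aemeasurable]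
  set c := m ^ (-a) with hc
  have hcpos : 0 < c := Real.rpow_pos_of_pos hm _
  have hsplit : Set.Ioi (0:ℝ) = Set.Ioc 0 c ∪ Set.Ioi c := (Set.Ioc_union_Ioi_eq_Ioi hcpos.le).symm
  have hea : -(1 / a) < -1 := by
    have : 1 < 1 / a := by rw [lt_div_iff₀ ha]; linarith
    linarith
  have hb1 : ∫⁻ t in Set.Ioc 0 c, (μ.restrict S) {y | t < (Φ y).toReal ^ (-a)} ≤ M * ENNReal.ofReal c := by
    calc _ ≤ ∫⁻ t in Set.Ioc 0 c, M := by
          apply lintegral_mono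
          intro t
          refine (measure_mono (Set.subset_univ _)).trans ?_
          simp [hMdef]
      _ = _ := by simp
  have hb2 : ∫⁻ t in Set.Ioi c, (μ.restrict S) {y | t < (Φ y).toReal ^ (-a)}
      ≤ ENNReal.ofReal (-c ^ (-(1/a) + 1) / (-(1/a) + 1)) := by
    rw [← integral_Ioi_rpow_of_lt hea hcpos, ofReal_integral_eq_lintegral_ofReal
      (integrableOn_Ioi_rpow_of_lt hea hcpos)]
    · apply setLIntegral_mono' measurableSet_Ioi
      intro t ht
      have ht0 : 0 < t := hcpos.trans ht
      rw [Measure.restrict_apply (measurableSet_lt measurable_const hfm)]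
      refine (measure_mono ?_).trans (aux_sublevel μ u _)
      rintro y ⟨hy, hyS⟩
      have hyt : Φ y ≠ ∞ := ne_top_of_le_ne_top hfin (hΦle y hyS)
      change Φ y ≤ _
      rw [← ENNReal.ofReal_toReal hyt]
      apply ENNReal.ofReal_le_ofReal
      rcases eq_or_lt_of_le (ENNReal.toReal_nonneg : 0 ≤ (Φ y).toReal) with h0 | h0
      · rw [← h0]; positivity
      · have hy' : t < (Φ y).toReal ^ (-a) := hy
        have := Real.rpow_le_rpow_of_nonpos ht0 hy'.le (z := -(1/a)) (by
          have : 0 < 1 / a := by positivity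
          linarith)
        rw [← Real.rpow_mul h0.le] at this
        have e : -a * -(1/a) = 1 := by field_simp
        rwa [e, Real.rpow_one] at this
    · rw [Filter.EventuallyLE, ae_restrict_iff' measurableSet_Ioi]
      exact Filter.Eventually.of_forall fun t ht => Real.rpow_nonneg (hcpos.trans ht).le _
  rw [hsplit, lintegral_union measurableSet_Ioi
    (Set.disjoint_left.2 fun t h1 h2 => not_lt.2 h1.2 h2)]
  refine (add_le_add hb1 hb2).trans (le_of_eq ?_)
  rw [hMm, ENNReal.ofReal_rpow_of_pos hm, ← ENNReal.ofReal_mul hm.le,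
    ← ENNReal.ofReal_mul (by have : 0 < 1 - a := by linarith
                             positivity), ← ENNReal.ofReal_add (by positivity)]
  · congr 1
    have e1 : c ^ (-(1/a) + 1) = m ^ (1 - a) := by
      rw [hc, ← Real.rpow_mul hm.le]; congr 1; field_simp; ring
    have e2 : m * c = m ^ (1 - a) := by
      rw [hc, sub_eq_add_neg, Real.rpow_add hm, Real.rpow_one]
    rw [e1, e2]
    have : 1 - a ≠ 0 := by linarith
    have h3 : -(1/a) + 1 ≠ 0 := by linarith
    have h4 : -1 + a ≠ 0 := by intro h; apply this; linarith
    have h5 : -(1/a) + 1 = -(1-a)/a := by field_simp; ring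
    rw [h5]
    field_simp
    ring
  · apply div_nonneg_of_nonpos
    · have := Real.rpow_nonneg hcpos.le (-(1/a)+1)
      linarith
    · linarith

lemma aux_minkowski {α β : Type*} [MeasurableSpace α] [MeasurableSpace β]
    (μ : Measure α) [IsFiniteMeasure μ] (ν : Measure β) [SFinite ν]
    (K : α → β → ℝ≥0∞) (hK : Measurable (Function.uncurry K)) (r : ℝ) (hr : 1 ≤ r) :
    ∫⁻ x, (∫⁻ y, K x y ∂ν) ^ r ∂μ ≤ (∫⁻ y, (∫⁻ x, K x y ^ r ∂μ) ^ (1 / r) ∂ν) ^ r := by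
  rcases hr.eq_or_lt with rfl | hr
  · simp only [ENNReal.rpow_one, div_one]
    exact (lintegral_lintegral_swap hK.aemeasurable).le
  set J := fun x => ∫⁻ y, K x y ∂ν with hJ
  have hJm : Measurable J := hK.lintegral_prod_right'
  set A := ∫⁻ y, (∫⁻ x, K x y ^ r ∂μ) ^ (1 / r) ∂ν with hA
  have hr0 : 0 < r := by linarith
  have hconj : r.HolderConjugate (r / (r - 1)) := Real.HolderConjugate.conjExponent hr
  have hrm : 0 < r - 1 := by linarith
  -- truncations
  have key : ∀ n : ℕ, ∫⁻ x, (min (J x) n) ^ r ∂μ ≤ A ^ r := by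
    intro n
    set I := ∫⁻ x, (min (J x) n) ^ r ∂μ with hI
    have hIfin : I ≠ ∞ := by
      refine ne_top_of_le_ne_top (b := ∫⁻ x, (n : ℝ≥0∞) ^ r ∂μ) ?_ ?_
      · rw [lintegral_const]
        exact ENNReal.mul_ne_top (ENNReal.rpow_ne_top_of_nonneg hr0.le (by simp)) (by simp)
      · exact lintegral_mono fun x => ENNReal.rpow_le_rpow (min_le_right _ _) hr0.le
    have hJnm : Measurable (fun x => (min (J x) n) ^ (r - 1)) :=
      (hJm.min measurable_const).pow_const _
    have step : I ≤ A * I ^ (1 / (r / (r - 1))) := by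
      calc I ≤ ∫⁻ x, J x * (min (J x) n) ^ (r - 1) ∂μ := by
            apply lintegral_mono
            intro x
            dsimp only
            have : (min (J x) n) ^ r = min (J x) n * (min (J x) n) ^ (r - 1) := by
              nth_rewrite 2 [← ENNReal.rpow_one (min (J x) n)]
              rw [← ENNReal.rpow_add_of_nonneg _ _ zero_le_one hrm.le]
              congr 1; ring
            rw [this]
            gcongr
            exact min_le_left _ _
        _ = ∫⁻ x, ∫⁻ y, K x y * (min (J x) n) ^ (r - 1) ∂ν ∂μ := by
            apply lintegral_congr
            intro x
            rw [lintegral_mul_const _ (hK.of_uncurry_left)]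
        _ = ∫⁻ y, ∫⁻ x, K x y * (min (J x) n) ^ (r - 1) ∂μ ∂ν := by
            apply lintegral_lintegral_swap
            exact (hK.mul (hJnm.comp measurable_fst)).aemeasurable
        _ ≤ ∫⁻ y, (∫⁻ x, K x y ^ r ∂μ) ^ (1 / r) * I ^ (1 / (r / (r - 1))) ∂ν := by
            apply lintegral_mono
            intro y
            refine (ENNReal.lintegral_mul_le_Lp_mul_Lq μ hconj
              (f := fun x => K x y) (g := fun x => (min (J x) n) ^ (r - 1))
              (hK.of_uncurry_right).aemeasurable hJnm.aemeasurable).trans (le_of_eq ?_)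
            congr 3
            funext x
            rw [← ENNReal.rpow_mul]
            congr 1
            field_simp
        _ = _ := by
            rw [lintegral_mul_const]
            exact ((hK.pow_const r).lintegral_prod_left').pow_const _
    by_cases hI0 : I = 0
    · rw [hI0]; exact zero_le
    have : I ^ (1 / r) ≤ A := by
      have e : I ^ (1 / r) = I * (I ^ (1 / (r / (r - 1))))⁻¹ := by
        rw [← ENNReal.rpow_neg]
        nth_rewrite 2 [← ENNReal.rpow_one I]
        rw [← ENNReal.rpow_add _ _ hI0 hIfin]
        congr 1
        field_simp
        ring
      rw [e, ← div_eq_mul_inv]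
      exact ENNReal.div_le_of_le_mul step
    calc I = (I ^ (1 / r)) ^ r := by
          rw [← ENNReal.rpow_mul, one_div, inv_mul_cancel₀ hr0.ne', ENNReal.rpow_one]
      _ ≤ _ := ENNReal.rpow_le_rpow this hr0.le
  have hsup : ∀ x, (J x) ^ r = ⨆ n : ℕ, (min (J x) n) ^ r := by
    intro x
    have h1 : J x = ⨆ n : ℕ, min (J x) n := by
      rw [← inf_iSup_eq, ENNReal.iSup_natCast]; simp
    conv_lhs => rw [h1]
    exact (ENNReal.orderIsoRpow r hr0).map_iSup _
  change ∫⁻ x, (J x) ^ r ∂μ ≤ _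
  simp_rw [hsup]
  rw [lintegral_iSup]
  · exact iSup_le key
  · exact fun n => (hJm.min measurable_const).pow_const _
  · intro n k hnk x
    dsimp only
    gcongr

/-- sufficiency part of the integral Hardy inequality on ℝ^N
(Euclidean case of homogeneous Lie groups, Q = N). -/
theorem integral_hardy_inequality_sufficiency
    (N : ℕ) (hN : 1 ≤ N) (p q p' : ℝ) (hp : 1 < p) (hpq : p ≤ q)
    (hp' : p' = p / (p - 1))
    (g h : EuclideanSpace ℝ (Fin N) → ℝ)
    (hg_meas : Measurable g) (hh_meas : Measurable h)
    (hg_pos : ∀ᵐ x, 0 < g x) (hh_pos : ∀ᵐ x, 0 < h x)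
    (hg_int : IntegrableOn g ({0}ᶜ) volume)
    (hh_loc : LocallyIntegrable (fun y => h y ^ (1 - p')) volume)
    (G H : EuclideanSpace ℝ (Fin N) → ℝ≥0∞)
    (hG : ∀ x, G x = ∫⁻ y in (ball (0 : EuclideanSpace ℝ (Fin N)) ‖x‖)ᶜ,
        ENNReal.ofReal (g y))
    (hH : ∀ x, H x = ∫⁻ y in ball (0 : EuclideanSpace ℝ (Fin N)) ‖x‖,
        ENNReal.ofReal (h y ^ (1 - p')))
    (D₁ : ℝ≥0∞)
    (hD₁ : D₁ = ⨆ x : {x : EuclideanSpace ℝ (Fin N) // x ≠ 0},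
        G x.1 ^ (1 / q) * H x.1 ^ (1 / p'))
    (hD₁_fin : D₁ < ∞)
    (f : EuclideanSpace ℝ (Fin N) → ℂ) (hf : Measurable f) :
    (∫⁻ x, (∫⁻ y in ball (0 : EuclideanSpace ℝ (Fin N)) ‖x‖,
          ENNReal.ofReal ‖f y‖) ^ q * ENNReal.ofReal (g x)) ^ (1 / q)
      ≤ D₁ * ENNReal.ofReal (p' ^ (1 / p') * p ^ (1 / q)) *
        (∫⁻ x, ENNReal.ofReal ‖f x‖ ^ p * ENNReal.ofReal (h x)) ^ (1 / p) := by
  have hp0 : 0 < p := by linarith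
  have hq0 : 0 < q := by linarith
  have hpm : 0 < p - 1 := by linarith
  have hp'0 : 0 < p' := by rw [hp']; positivity
  have hp'1 : 1 / p' = 1 - 1 / p := by rw [hp']; field_simp
  have hconj : p.HolderConjugate p' := by rw [hp']; exact Real.HolderConjugate.conjExponent hp
  have : Nonempty (Fin N) := ⟨⟨0, hN⟩⟩
  set ψ : EuclideanSpace ℝ (Fin N) → ℝ≥0∞ := fun y => ENNReal.ofReal (h y ^ (1 - p')) with hψ
  set γ : EuclideanSpace ℝ (Fin N) → ℝ≥0∞ := fun y => ENNReal.ofReal (g y) with hγ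
  have hψm : Measurable ψ := (hh_meas.pow_const _).ennreal_ofReal
  have hγm : Measurable γ := hg_meas.ennreal_ofReal
  set μH : Measure (EuclideanSpace ℝ (Fin N)) := volume.withDensity ψ with hμH
  set μG : Measure (EuclideanSpace ℝ (Fin N)) := volume.withDensity γ with hμG
  have hH' : ∀ x, H x = μH {z | ‖z‖ ≤ ‖x‖} := by
    intro x
    have e : {z : EuclideanSpace ℝ (Fin N) | ‖z‖ ≤ ‖x‖} = closedBall 0 ‖x‖ := by ext z; simp
    rw [hH x, hμH, e, withDensity_apply _ measurableSet_closedBall]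
    apply setLIntegral_congr
    refine Filter.EventuallyLE.antisymm (LE.le.eventuallyLE ball_subset_closedBall) ?_
    rw [ae_le_set, closedBall_sdiff_ball]
    exact Measure.addHaar_sphere _ _ _
  have hG' : ∀ x, G x = μG {z | -‖z‖ ≤ -‖x‖} := by
    intro x
    have e : {z : EuclideanSpace ℝ (Fin N) | -‖z‖ ≤ -‖x‖} = (ball 0 ‖x‖)ᶜ := by ext z; simp
    rw [hG x, hμG, e, withDensity_apply _ measurableSet_ball.compl]
  have hHm : Measurable H := by
    rw [funext hH']; exact aux_meas μH _ measurable_norm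
  have hGm : Measurable G := by
    rw [funext hG']; exact aux_meas μG (fun z => -‖z‖) measurable_norm.neg
  have hHtop : ∀ x, H x ≠ ∞ := by
    intro x
    have h1 : IntegrableOn (fun y => h y ^ (1 - p')) (closedBall (0 : EuclideanSpace ℝ (Fin N)) ‖x‖) volume :=
      hh_loc.integrableOn_isCompact (isCompact_closedBall _ _)
    have h2 := (h1.mono_set ball_subset_closedBall).lintegral_lt_top
    rw [hH x]; exact h2.ne
  have hGtop : ∀ x, G x ≠ ∞ := by
    intro x
    rw [hG x]
    have h2 := hg_int.lintegral_lt_top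
    rw [restrict_compl_singleton] at h2
    exact ne_top_of_le_ne_top h2.ne (setLIntegral_le_lintegral _ _)
  have hψpos : ∀ᵐ x, ψ x ≠ 0 := by
    filter_upwards [hh_pos] with x hx
    exact (ENNReal.ofReal_pos.2 (Real.rpow_pos_of_pos hx _)).ne'
  have hγpos : ∀ᵐ x, γ x ≠ 0 := by
    filter_upwards [hg_pos] with x hx
    exact (ENNReal.ofReal_pos.2 hx).ne'
  have hne : ∀ᵐ x : EuclideanSpace ℝ (Fin N), x ≠ 0 := by
    rw [ae_iff]; simp
  have hH0 : ∀ x, x ≠ 0 → H x ≠ 0 := by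
    intro x hx h0
    rw [hH x, setLIntegral_eq_zero_iff measurableSet_ball hψm] at h0
    have : volume (ball (0 : EuclideanSpace ℝ (Fin N)) ‖x‖) = 0 := by
      rw [← nonpos_iff_eq_zero]
      refine (measure_mono (t := {y | ¬ (y ∉ ball (0:EuclideanSpace ℝ (Fin N)) ‖x‖)}) (fun y hy => by simpa using hy)).trans ?_
      rw [nonpos_iff_eq_zero, ← ae_iff]
      filter_upwards [h0, hψpos] with y h1 h2 h3
      exact h2 (h1 h3)
    exact (measure_ball_pos volume (0 : EuclideanSpace ℝ (Fin N)) (norm_pos_iff.2 hx)).ne' this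
  have hG0 : ∀ x, G x ≠ 0 := by
    intro x h0
    rw [hG x, setLIntegral_eq_zero_iff measurableSet_ball.compl hγm] at h0
    have h1 : volume ((ball (0 : EuclideanSpace ℝ (Fin N)) ‖x‖)ᶜ) = 0 := by
      rw [← nonpos_iff_eq_zero]
      refine (measure_mono (t := {y | ¬ (y ∉ (ball (0:EuclideanSpace ℝ (Fin N)) ‖x‖)ᶜ)}) (fun y hy => by simpa using hy)).trans ?_
      rw [nonpos_iff_eq_zero, ← ae_iff]
      filter_upwards [h0, hγpos] with y h1 h2 h3
      exact h2 (h1 h3)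
    have h2 : volume (Set.univ : Set (EuclideanSpace ℝ (Fin N))) < ∞ := by
      rw [← measure_add_measure_compl (measurableSet_ball (x := (0 : EuclideanSpace ℝ (Fin N))) (ε := ‖x‖)), h1, add_zero]
      exact measure_ball_lt_top
    rw [measure_univ_of_isAddLeftInvariant] at h2
    exact lt_irrefl _ h2
  -- Step A
  have hA : ∀ x, ∫⁻ y in ball (0 : EuclideanSpace ℝ (Fin N)) ‖x‖, ψ y * H y ^ (-(1 / p))
      ≤ ENNReal.ofReal p' * H x ^ (1 / p') := by
    intro x
    have h1 := aux_int μH (fun z : EuclideanSpace ℝ (Fin N) => ‖z‖) measurable_norm (1 / p) (by positivity)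
      (by rw [div_lt_one hp0]; exact hp) x (by rw [← hH']; exact hHtop x)
    simp only [← hH'] at h1
    rw [← hp'1, one_div_one_div] at h1
    refine le_trans ?_ h1
    have e : {z : EuclideanSpace ℝ (Fin N) | ‖z‖ ≤ ‖x‖} = closedBall 0 ‖x‖ := by ext z; simp
    rw [e, hμH, restrict_withDensity measurableSet_closedBall,
      lintegral_withDensity_eq_lintegral_mul _ hψm (hHm.pow_const _)]
    exact lintegral_mono_set ball_subset_closedBall
  -- Step B
  have hB : ∀ y, ∫⁻ x in (ball (0 : EuclideanSpace ℝ (Fin N)) ‖y‖)ᶜ, γ x * G x ^ (-(1 / p'))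
      ≤ ENNReal.ofReal p * G y ^ (1 / p) := by
    intro y
    have hp1 : 1 - 1 / p' = 1 / p := by rw [hp'1]; ring
    have h1 := aux_int μG (fun z : EuclideanSpace ℝ (Fin N) => -‖z‖) measurable_norm.neg (1 / p') (by positivity)
      (by rw [hp'1]; have : 0 < 1 / p := by positivity
          linarith) y (by rw [← hG']; exact hGtop y)
    simp only [← hG'] at h1
    rw [hp1, one_div_one_div] at h1
    refine le_trans ?_ h1
    have e : {z : EuclideanSpace ℝ (Fin N) | -‖z‖ ≤ -‖y‖} = (ball 0 ‖y‖)ᶜ := by ext z; simp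
    rw [e, hμG, restrict_withDensity measurableSet_ball.compl,
      lintegral_withDensity_eq_lintegral_mul _ hγm (hGm.pow_const _)]
    exact le_rfl
  -- the supremum
  have hD : ∀ x : EuclideanSpace ℝ (Fin N), x ≠ 0 → G x ^ (1 / q) * H x ^ (1 / p') ≤ D₁ := by
    intro x hx
    rw [hD₁]
    exact le_iSup (fun x : {x : EuclideanSpace ℝ (Fin N) // x ≠ 0} => G x.1 ^ (1 / q) * H x.1 ^ (1 / p')) ⟨x, hx⟩
  set φ : EuclideanSpace ℝ (Fin N) → ℝ≥0∞ := fun y => ENNReal.ofReal ‖f y‖ with hφ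
  have hφm : Measurable φ := hf.norm.ennreal_ofReal
  set η : EuclideanSpace ℝ (Fin N) → ℝ≥0∞ := fun y => ENNReal.ofReal (h y) with hη
  have hηm : Measurable η := hh_meas.ennreal_ofReal
  set F : EuclideanSpace ℝ (Fin N) → ℝ≥0∞ := fun y => φ y ^ p * η y * H y ^ (1 / p') with hF
  have hFm : Measurable F := ((hφm.pow_const _).mul hηm).mul (hHm.pow_const _)
  -- Step C
  have hC : ∀ x, ∫⁻ y in ball (0 : EuclideanSpace ℝ (Fin N)) ‖x‖, φ y
      ≤ (∫⁻ y in ball (0 : EuclideanSpace ℝ (Fin N)) ‖x‖, F y) ^ (1 / p)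
        * (ENNReal.ofReal p' * H x ^ (1 / p')) ^ (1 / p') := by
    intro x
    have hol := ENNReal.lintegral_mul_le_Lp_mul_Lq (volume.restrict (ball (0 : EuclideanSpace ℝ (Fin N)) ‖x‖)) hconj
      (f := fun y => φ y * η y ^ (1 / p) * H y ^ (1 / p' * (1 / p)))
      (g := fun y => η y ^ (-(1 / p)) * H y ^ (-(1 / p' * (1 / p))))
      ((hφm.mul (hηm.pow_const _)).mul (hHm.pow_const _)).aemeasurable
      ((hηm.pow_const _).mul (hHm.pow_const _)).aemeasurable
    have e1 : ∫⁻ y in ball (0 : EuclideanSpace ℝ (Fin N)) ‖x‖, φ y = ∫⁻ y in ball (0 : EuclideanSpace ℝ (Fin N)) ‖x‖,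
        ((fun y => φ y * η y ^ (1 / p) * H y ^ (1 / p' * (1 / p))) *
        (fun y => η y ^ (-(1 / p)) * H y ^ (-(1 / p' * (1 / p))))) y := by
      apply lintegral_congr_ae
      apply ae_restrict_of_ae
      filter_upwards [hh_pos, hne] with y hy hy0
      have hη0 : η y ≠ 0 := (ENNReal.ofReal_pos.2 hy).ne'
      have hηt : η y ≠ ∞ := ENNReal.ofReal_ne_top
      have a1 : η y ^ (1 / p) * η y ^ (-(1 / p)) = 1 := by
        rw [← ENNReal.rpow_add _ _ hη0 hηt]; simp
      have a2 : H y ^ (1 / p' * (1 / p)) * H y ^ (-(1 / p' * (1 / p))) = 1 := by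
        rw [← ENNReal.rpow_add _ _ (hH0 y hy0) (hHtop y)]; simp
      simp only [Pi.mul_apply]
      calc φ y = φ y * (η y ^ (1 / p) * η y ^ (-(1 / p)))
            * (H y ^ (1 / p' * (1 / p)) * H y ^ (-(1 / p' * (1 / p)))) := by rw [a1, a2]; simp
        _ = _ := by ring
    have e2 : ∀ y, (φ y * η y ^ (1 / p) * H y ^ (1 / p' * (1 / p))) ^ p = F y := by
      intro y
      rw [ENNReal.mul_rpow_of_nonneg _ _ hp0.le, ENNReal.mul_rpow_of_nonneg _ _ hp0.le,
        ← ENNReal.rpow_mul, ← ENNReal.rpow_mul, mul_assoc (1 / p'), one_div_mul_cancel hp0.ne']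
      simp [hF]
    have e3 : ∫⁻ y in ball (0 : EuclideanSpace ℝ (Fin N)) ‖x‖, (η y ^ (-(1 / p)) * H y ^ (-(1 / p' * (1 / p)))) ^ p'
        = ∫⁻ y in ball (0 : EuclideanSpace ℝ (Fin N)) ‖x‖, ψ y * H y ^ (-(1 / p)) := by
      apply lintegral_congr_ae
      apply ae_restrict_of_ae
      filter_upwards [hh_pos] with y hy
      rw [ENNReal.mul_rpow_of_nonneg _ _ hp'0.le, ← ENNReal.rpow_mul, ← ENNReal.rpow_mul]
      have b1 : -(1 / p) * p' = 1 - p' := by rw [hp']; field_simp; ring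
      have b2 : -(1 / p' * (1 / p)) * p' = -(1 / p) := by field_simp
      rw [b1, b2, hη, hψ]
      simp only
      rw [ENNReal.ofReal_rpow_of_pos hy]
    rw [e1]
    refine hol.trans ?_
    simp only [e2]
    rw [e3]
    gcongr
    exact hA x
  -- Step D
  have hDD : ∀ x : EuclideanSpace ℝ (Fin N), x ≠ 0 → H x ^ (1 / p') ≤ D₁ * G x ^ (-(1 / q)) := by
    intro x hx
    calc H x ^ (1 / p') = (G x ^ (1 / q) * H x ^ (1 / p')) * G x ^ (-(1 / q)) := by
          have : G x ^ (1 / q) * G x ^ (-(1 / q)) = 1 := by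
            rw [← ENNReal.rpow_add _ _ (hG0 x) (hGtop x)]; simp
          calc _ = (G x ^ (1 / q) * G x ^ (-(1 / q))) * H x ^ (1 / p') := by rw [this, one_mul]
            _ = _ := by ring
      _ ≤ _ := by gcongr; exact hD x hx
  set r := q / p with hr
  have hr1 : 1 ≤ r := by rw [hr, le_div_iff₀ hp0]; linarith
  have hr0 : 0 < r := by linarith
  set w : EuclideanSpace ℝ (Fin N) → ℝ≥0∞ := fun x => γ x * G x ^ (-(1 / p')) with hw
  have hwm : Measurable w := hγm.mul (hGm.pow_const _)
  set C := (ENNReal.ofReal p' * D₁) ^ (q / p') with hCdef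
  have hstep1 : ∫⁻ x, (∫⁻ y in ball (0 : EuclideanSpace ℝ (Fin N)) ‖x‖, φ y) ^ q * γ x
      ≤ C * ∫⁻ x, w x * (∫⁻ y in ball (0 : EuclideanSpace ℝ (Fin N)) ‖x‖, F y) ^ r := by
    rw [← lintegral_const_mul' _ _ (by
      rw [hCdef]
      exact ENNReal.rpow_ne_top_of_nonneg (by positivity)
        (ENNReal.mul_ne_top ENNReal.ofReal_ne_top hD₁_fin.ne))]
    apply lintegral_mono_ae
    filter_upwards [hne] with x hx
    calc (∫⁻ y in ball (0 : EuclideanSpace ℝ (Fin N)) ‖x‖, φ y) ^ q * γ x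
        ≤ ((∫⁻ y in ball (0 : EuclideanSpace ℝ (Fin N)) ‖x‖, F y) ^ (1 / p)
        * (ENNReal.ofReal p' * (D₁ * G x ^ (-(1 / q)))) ^ (1 / p')) ^ q * γ x := by
          gcongr
          refine (hC x).trans ?_
          gcongr
          exact hDD x hx
      _ = _ := by
          rw [ENNReal.mul_rpow_of_nonneg _ _ hq0.le, ← ENNReal.rpow_mul, ← ENNReal.rpow_mul,
            ← mul_assoc (ENNReal.ofReal p'),
            ENNReal.mul_rpow_of_nonneg _ _ (by positivity : 0 ≤ 1 / p' * q), ← ENNReal.rpow_mul]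
          have b1 : -(1 / q) * (1 / p' * q) = -(1 / p') := by field_simp
          have b2 : 1 / p * q = r := by rw [hr]; ring
          have b3 : 1 / p' * q = q / p' := by ring
          rw [b1, b2, b3]
          simp only [hw]
          ring
  set X := ∫⁻ x, φ x ^ p * η x with hX
  set μw : Measure (EuclideanSpace ℝ (Fin N)) := volume.withDensity w with hμw
  have : IsFiniteMeasure μw := by
    constructor
    rw [hμw, withDensity_apply _ MeasurableSet.univ, Measure.restrict_univ]
    have := hB 0
    simp only [norm_zero, ball_zero, Set.compl_empty, Measure.restrict_univ] at this
    refine lt_of_le_of_lt this ?_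
    exact ENNReal.mul_lt_top ENNReal.ofReal_lt_top
      (ENNReal.rpow_lt_top_of_nonneg (by positivity) (hGtop 0))
  set K : EuclideanSpace ℝ (Fin N) → EuclideanSpace ℝ (Fin N) → ℝ≥0∞ := fun x y => (ball (0 : EuclideanSpace ℝ (Fin N)) ‖x‖).indicator F y with hK
  have hSm : MeasurableSet {z : (EuclideanSpace ℝ (Fin N)) × (EuclideanSpace ℝ (Fin N)) | ‖z.2‖ < ‖z.1‖} :=
    measurableSet_lt measurable_snd.norm measurable_fst.norm
  have hKm : Measurable (Function.uncurry K) := by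
    have : Function.uncurry K = {z : (EuclideanSpace ℝ (Fin N)) × (EuclideanSpace ℝ (Fin N)) | ‖z.2‖ < ‖z.1‖}.indicator (fun z => F z.2) := by
      ext ⟨x, y⟩
      simp [Function.uncurry, hK, Set.indicator]
    rw [this]
    exact (hFm.comp measurable_snd).indicator hSm
  have hstep2 : ∫⁻ x, w x * (∫⁻ y in ball (0 : EuclideanSpace ℝ (Fin N)) ‖x‖, F y) ^ r
      ≤ (ENNReal.ofReal p ^ (1 / r) * D₁ * X) ^ r := by
    have mink := aux_minkowski μw volume K hKm r hr1
    have e1 : ∀ x, ∫⁻ y, K x y = ∫⁻ y in ball (0 : EuclideanSpace ℝ (Fin N)) ‖x‖, F y := fun x =>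
      lintegral_indicator measurableSet_ball _
    have hJm : Measurable (fun x => (∫⁻ y, K x y) ^ r) :=
      (hKm.lintegral_prod_right').pow_const _
    have e2 := lintegral_withDensity_eq_lintegral_mul volume hwm hJm
    rw [← hμw] at e2
    simp only [Pi.mul_apply, e1] at e2
    simp only [e1] at mink
    rw [← e2]
    refine mink.trans ?_
    apply ENNReal.rpow_le_rpow _ hr0.le
    have hcm : Measurable (fun x => φ x ^ p * η x) := (hφm.pow_const _).mul hηm
    rw [hX, ← lintegral_const_mul _ hcm]
    apply lintegral_mono_ae
    filter_upwards [hne] with y hy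
    have k1 : ∫⁻ x, K x y ^ r ∂μw ≤ F y ^ r * (ENNReal.ofReal p * G y ^ (1 / p)) := by
      calc ∫⁻ x, K x y ^ r ∂μw ≤ ∫⁻ x, ((ball (0 : EuclideanSpace ℝ (Fin N)) ‖y‖)ᶜ).indicator (fun _ => F y ^ r) x ∂μw := by
            apply lintegral_mono
            intro x
            by_cases hxy : ‖y‖ < ‖x‖
            · have h1 : y ∈ ball (0 : EuclideanSpace ℝ (Fin N)) ‖x‖ := by simpa using hxy
              have h2 : x ∈ (ball (0 : EuclideanSpace ℝ (Fin N)) ‖y‖)ᶜ := by simpa using hxy.le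
              simp only [hK, Set.indicator_of_mem h1, Set.indicator_of_mem h2]
              exact le_rfl
            · have h1 : y ∉ ball (0 : EuclideanSpace ℝ (Fin N)) ‖x‖ := by simpa using hxy
              simp only [hK, Set.indicator_of_notMem h1, ENNReal.zero_rpow_of_pos hr0]
              exact zero_le
        _ = F y ^ r * μw ((ball (0 : EuclideanSpace ℝ (Fin N)) ‖y‖)ᶜ) := by
            rw [lintegral_indicator measurableSet_ball.compl, setLIntegral_const]
        _ ≤ _ := by
            gcongr
            rw [hμw, withDensity_apply _ measurableSet_ball.compl]
            exact hB y
    calc (∫⁻ x, K x y ^ r ∂μw) ^ (1 / r)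
        ≤ (F y ^ r * (ENNReal.ofReal p * G y ^ (1 / p))) ^ (1 / r) := by gcongr
      _ = F y * (ENNReal.ofReal p ^ (1 / r) * G y ^ (1 / q)) := by
          have hr' : 0 ≤ 1 / r := by positivity
          rw [ENNReal.mul_rpow_of_nonneg _ _ hr', ENNReal.mul_rpow_of_nonneg _ _ hr',
            ← ENNReal.rpow_mul, ← ENNReal.rpow_mul, mul_one_div_cancel hr0.ne', ENNReal.rpow_one]
          have : 1 / p * (1 / r) = 1 / q := by rw [hr]; field_simp
          rw [this]
      _ = ENNReal.ofReal p ^ (1 / r) * (G y ^ (1 / q) * H y ^ (1 / p')) * (φ y ^ p * η y) := by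
          simp only [hF]; ring
      _ ≤ _ := by
          gcongr
          exact hD y hy
  calc (∫⁻ x, (∫⁻ y in ball (0 : EuclideanSpace ℝ (Fin N)) ‖x‖, φ y) ^ q * γ x) ^ (1 / q)
      ≤ (C * (ENNReal.ofReal p ^ (1 / r) * D₁ * X) ^ r) ^ (1 / q) := by
        gcongr
        refine hstep1.trans ?_
        gcongr
    _ = (ENNReal.ofReal p' ^ (1 / p') * D₁ ^ (1 / p'))
          * (ENNReal.ofReal p ^ (1 / q) * D₁ ^ (1 / p) * X ^ (1 / p)) := by
        have b1 : q / p' * (1 / q) = 1 / p' := by field_simp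
        have b2 : r * (1 / q) = 1 / p := by rw [hr]; field_simp
        have b3 : 1 / r * (1 / p) = 1 / q := by rw [hr]; field_simp
        rw [ENNReal.mul_rpow_of_nonneg _ _ (by positivity : 0 ≤ 1 / q), hCdef,
          ← ENNReal.rpow_mul, ← ENNReal.rpow_mul, b1, b2,
          ENNReal.mul_rpow_of_nonneg _ _ (by positivity : 0 ≤ 1 / p'),
          ENNReal.mul_rpow_of_nonneg _ _ (by positivity : 0 ≤ 1 / p),
          ENNReal.mul_rpow_of_nonneg _ _ (by positivity : 0 ≤ 1 / p), ← ENNReal.rpow_mul, b3]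
    _ = (D₁ ^ (1 / p') * D₁ ^ (1 / p)) * (ENNReal.ofReal p' ^ (1 / p') * ENNReal.ofReal p ^ (1 / q))
          * X ^ (1 / p) := by ring
    _ = _ := by
        rw [← ENNReal.rpow_add_of_nonneg _ _ (by positivity) (by positivity),
          ENNReal.ofReal_rpow_of_pos hp'0, ENNReal.ofReal_rpow_of_pos hp0,
          ← ENNReal.ofReal_mul (by positivity), hp'1, sub_add_cancel, ENNReal.rpow_one]
end

section
/- Let N ≥ 1, 1 < p ≤ q < ∞, and let α, β ∈ ℝ satisfy β + N < 0, α < N(p−1), and q(α+N) − p(β+N) = pqN. Then for every measurable function f : ℝ^N → ℂ one has ( ∫_{ℝ^N} ( ∫_{B(0,|x|)} |f(y)| dy )^q |x|^β dx )^{1/q} ≤ (p')^{1/p'} p^{1/q} · |𝔖|^{1/q + 1/p'} / ( |β+N|^{1/q} (α(1−p') + N)^{1/p'} ) · ( ∫_{ℝ^N} |f(x)|^p |x|^α dx )^{1/p}. -/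
open MeasureTheory Metric ENNReal

theorem hardy_minkowski {X Y : Type*} [MeasurableSpace X] [MeasurableSpace Y]
    (μ : Measure X) (ν : Measure Y) [SigmaFinite μ] [SFinite ν] (θ : ℝ) (hθ : 1 ≤ θ)
    (k : X → Y → ℝ≥0∞) (hk : Measurable (Function.uncurry k)) :
    (∫⁻ x, (∫⁻ y, k x y ∂ν) ^ θ ∂μ) ^ (1 / θ) ≤ ∫⁻ y, (∫⁻ x, k x y ^ θ ∂μ) ^ (1 / θ) ∂ν := by
  rcases hθ.eq_or_lt with rfl | hθ1
  · simp only [ENNReal.rpow_one, div_one]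
    rw [lintegral_lintegral_swap hk.aemeasurable]
  have hθ0 : 0 < θ := by linarith
  have hc := Real.HolderConjugate.conjExponent hθ1
  set θ' := θ.conjExponent
  set M := ∫⁻ y, (∫⁻ x, k x y ^ θ ∂μ) ^ (1 / θ) ∂ν with hM
  set Φ : X → ℝ≥0∞ := fun x => ∫⁻ y, k x y ∂ν with hΦ
  have hΦm : Measurable Φ := hk.lintegral_prod_right'
  let Ψ : ℕ → X → ℝ≥0∞ := fun n => (spanningSets μ n).indicator (fun x => min (Φ x) n)
  have hΨm : ∀ n, Measurable (Ψ n) := fun n =>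
    (hΦm.min measurable_const).indicator (measurableSet_spanningSets μ n)
  have hΨΦ : ∀ n x, Ψ n x ≤ Φ x := fun n x =>
    (Set.indicator_le_self _ _ x).trans (min_le_left _ _)
  have hfin : ∀ n, ∫⁻ x, Ψ n x ^ θ ∂μ ≠ ∞ := by
    intro n
    have h1 : ∫⁻ x, Ψ n x ^ θ ∂μ ≤ ∫⁻ x, (spanningSets μ n).indicator (fun _ => (n : ℝ≥0∞) ^ θ) x ∂μ := by
      apply lintegral_mono
      intro x
      by_cases hx : x ∈ spanningSets μ n
      · simp only [Ψ, Set.indicator_of_mem hx]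
        exact ENNReal.rpow_le_rpow (min_le_right _ _) hθ0.le
      · simp [Ψ, Set.indicator_of_notMem hx, hθ0]
    rw [lintegral_indicator_const (measurableSet_spanningSets μ n)] at h1
    refine (h1.trans_lt (ENNReal.mul_lt_top ?_ (measure_spanningSets_lt_top μ n))).ne
    exact ENNReal.rpow_lt_top_of_nonneg hθ0.le (by simp)
  have hkey : ∀ n, ∫⁻ x, Ψ n x ^ θ ∂μ ≤ M * (∫⁻ x, Ψ n x ^ θ ∂μ) ^ (1 / θ') := by
    intro n
    calc ∫⁻ x, Ψ n x ^ θ ∂μ ≤ ∫⁻ x, Φ x * Ψ n x ^ (θ - 1) ∂μ := by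
          apply lintegral_mono
          intro x
          calc Ψ n x ^ θ = Ψ n x * Ψ n x ^ (θ - 1) := by
                conv_lhs => rw [show θ = 1 + (θ - 1) by ring,
                  ENNReal.rpow_add_of_nonneg _ _ zero_le_one (by linarith), ENNReal.rpow_one]
            _ ≤ Φ x * Ψ n x ^ (θ - 1) := mul_le_mul_left (hΨΦ n x) _
      _ = ∫⁻ x, ∫⁻ y, k x y * Ψ n x ^ (θ - 1) ∂ν ∂μ := by
          apply lintegral_congr
          intro x
          exact (lintegral_mul_const _ (hk.comp (measurable_prodMk_left (x := x)))).symm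
      _ = ∫⁻ y, ∫⁻ x, k x y * Ψ n x ^ (θ - 1) ∂μ ∂ν := by
          rw [lintegral_lintegral_swap]
          exact (hk.mul (((hΨm n).pow_const _).comp measurable_fst)).aemeasurable
      _ ≤ ∫⁻ y, (∫⁻ x, k x y ^ θ ∂μ) ^ (1 / θ) * (∫⁻ x, Ψ n x ^ θ ∂μ) ^ (1 / θ') ∂ν := by
          apply lintegral_mono
          intro y
          exact ENNReal.lintegral_mul_rpow_le_lintegral_rpow_mul_lintegral_rpow hc
            (hk.comp measurable_prodMk_right).aemeasurable (hΨm n).aemeasurable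
      _ = _ := by
          rw [lintegral_mul_const]
          exact ((hk.pow_const θ).lintegral_prod_left').pow_const _
  have hb : ∀ n, ∫⁻ x, Ψ n x ^ θ ∂μ ≤ M ^ θ := by
    intro n
    set I := ∫⁻ x, Ψ n x ^ θ ∂μ with hI
    by_cases h0 : I = 0
    · rw [h0]; exact zero_le
    have h2 : I ^ (1 / θ) * I ^ (1 / θ') ≤ M * I ^ (1 / θ') := by
      rw [← ENNReal.rpow_add _ _ h0 (hfin n)]
      have : 1 / θ + 1 / θ' = 1 := by simpa using hc.inv_add_inv_eq_one
      rw [this, ENNReal.rpow_one]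
      exact hkey n
    have h3 : I ^ (1 / θ) ≤ M := by
      refine (ENNReal.mul_le_mul_iff_left ?_ ?_).1 h2
      · exact (ENNReal.rpow_pos (pos_iff_ne_zero.2 h0) (hfin n)).ne'
      · exact ENNReal.rpow_ne_top_of_nonneg (by have := hc.symm.pos; positivity) (hfin n)
    calc I = (I ^ (1 / θ)) ^ θ := by
          rw [← ENNReal.rpow_mul, one_div_mul_cancel hθ0.ne', ENNReal.rpow_one]
      _ ≤ M ^ θ := ENNReal.rpow_le_rpow h3 hθ0.le
  have hlim : ∀ x, Filter.Tendsto (fun n => Ψ n x ^ θ) Filter.atTop (nhds (Φ x ^ θ)) := by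
    intro x
    refine (ENNReal.continuous_rpow_const.tendsto _).comp ?_
    have h1 : Filter.Tendsto (fun n : ℕ => min (Φ x) (n : ℝ≥0∞)) Filter.atTop (nhds (Φ x)) := by
      have := (tendsto_const_nhds (x := Φ x)).min ENNReal.tendsto_nat_nhds_top
      simpa using this
    refine h1.congr' ?_
    filter_upwards [Filter.eventually_ge_atTop (spanningSetsIndex μ x)] with n hn
    have : x ∈ spanningSets μ n :=
      monotone_spanningSets μ hn (mem_spanningSetsIndex μ x)
    simp [Ψ, this]
  have hfinal : ∫⁻ x, Φ x ^ θ ∂μ ≤ M ^ θ := by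
    calc ∫⁻ x, Φ x ^ θ ∂μ = ∫⁻ x, Filter.liminf (fun n => Ψ n x ^ θ) Filter.atTop ∂μ := by
          apply lintegral_congr
          intro x
          exact (hlim x).liminf_eq.symm
      _ ≤ Filter.liminf (fun n => ∫⁻ x, Ψ n x ^ θ ∂μ) Filter.atTop :=
          lintegral_liminf_le (fun n => (hΨm n).pow_const θ)
      _ ≤ Filter.liminf (fun _ : ℕ => M ^ θ) Filter.atTop :=
          Filter.liminf_le_liminf (Filter.Eventually.of_forall hb)
      _ = M ^ θ := Filter.liminf_const _
  calc (∫⁻ x, Φ x ^ θ ∂μ) ^ (1 / θ) ≤ (M ^ θ) ^ (1 / θ) :=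
        ENNReal.rpow_le_rpow hfinal (by positivity)
    _ = M := by rw [← ENNReal.rpow_mul, mul_one_div_cancel hθ0.ne', ENNReal.rpow_one]

theorem hardy_polar (N : ℕ) (hN : 1 ≤ N) (g : ℝ → ℝ≥0∞) (hg : Measurable g) :
    ∫⁻ x : EuclideanSpace ℝ (Fin N), g ‖x‖ =
      (N * volume (ball (0 : EuclideanSpace ℝ (Fin N)) 1)) *
        ∫⁻ t in Set.Ioi (0 : ℝ), ENNReal.ofReal (t ^ (N - 1)) * g t := by
  have : Nonempty (Fin N) := ⟨⟨0, hN⟩⟩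
  let E := EuclideanSpace ℝ (Fin N)
  have hmp := (volume : Measure E).measurePreserving_homeomorphUnitSphereProd
  have h1 : ∫⁻ x : E, g ‖x‖ = ∫⁻ x : ({(0 : E)}ᶜ : Set E), g ‖x.1‖ ∂((volume : Measure E).comap Subtype.val) := by
    rw [lintegral_subtype_comap (measurableSet_singleton _).compl (fun x : E => g ‖x‖),
      restrict_compl_singleton]
  have h2 : ∫⁻ x : ({(0 : E)}ᶜ : Set E), g ‖x.1‖ ∂((volume : Measure E).comap Subtype.val) =
      ∫⁻ z, g z.2 ∂((volume : Measure E).toSphere.prod (.volumeIoiPow (Module.finrank ℝ E - 1))) := by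
    rw [← hmp.lintegral_comp (f := fun z => g z.2) (hg.comp (measurable_subtype_coe.comp measurable_snd))]
    simp
  have hd : Module.finrank ℝ E = N := by simp [E]
  change ∫⁻ x : E, g ‖x‖ = _
  rw [h1, h2, lintegral_prod (fun z : sphere (0 : E) 1 × Set.Ioi (0 : ℝ) => g z.2)
    (hg.comp (measurable_subtype_coe.comp measurable_snd)).aemeasurable]
  dsimp only
  rw [lintegral_const, Measure.toSphere_apply_univ, hd, mul_comm]
  congr 1
  rw [Measure.volumeIoiPow, lintegral_withDensity_eq_lintegral_mul _ (by fun_prop) (by fun_prop)]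
  rw [← lintegral_subtype_comap measurableSet_Ioi
    (fun t : ℝ => ENNReal.ofReal (t ^ (N - 1)) * g t)]
  rfl

theorem hardy_ball (N : ℕ) (hN : 1 ≤ N) (c r : ℝ) (hc : 0 < c) (hr : 0 ≤ r) :
    ∫⁻ x in ball (0 : EuclideanSpace ℝ (Fin N)) r, ENNReal.ofReal ‖x‖ ^ (c - N) =
      (N * volume (ball (0 : EuclideanSpace ℝ (Fin N)) 1)) * ENNReal.ofReal (r ^ c / c) := by
  rw [← lintegral_indicator measurableSet_ball]
  have := hardy_polar N hN ((Set.Iio r).indicator fun t => ENNReal.ofReal t ^ (c - N))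
    ((by fun_prop : Measurable fun t : ℝ => ENNReal.ofReal t ^ (c - N)).indicator measurableSet_Iio)
  have h0 : ∀ x : EuclideanSpace ℝ (Fin N),
      (ball (0 : EuclideanSpace ℝ (Fin N)) r).indicator (fun x => ENNReal.ofReal ‖x‖ ^ (c - N)) x =
      (Set.Iio r).indicator (fun t => ENNReal.ofReal t ^ (c - N)) ‖x‖ := by
    intro x
    by_cases hx : ‖x‖ < r
    · rw [Set.indicator_of_mem (by simpa using hx), Set.indicator_of_mem (by simpa using hx)]
    · rw [Set.indicator_of_notMem (by simpa using hx), Set.indicator_of_notMem (by simpa using hx)]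
  rw [lintegral_congr h0, this]
  congr 1
  have h1 : ∫⁻ t in Set.Ioi (0 : ℝ), ENNReal.ofReal (t ^ (N - 1)) *
      (Set.Iio r).indicator (fun t => ENNReal.ofReal t ^ (c - N)) t =
      ∫⁻ t in Set.Ioo (0 : ℝ) r, ENNReal.ofReal (t ^ (c - 1)) := by
    rw [← lintegral_indicator measurableSet_Ioi, ← lintegral_indicator measurableSet_Ioo]
    apply lintegral_congr
    intro t
    by_cases ht : 0 < t
    · by_cases ht' : t < r
      · simp only [Set.indicator_apply, Set.mem_Ioi, Set.mem_Iio, Set.mem_Ioo, ht, ht', if_true, and_self]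
        rw [ENNReal.ofReal_rpow_of_pos ht, ← ENNReal.ofReal_mul (by positivity),
          ← Real.rpow_natCast, ← Real.rpow_add ht, Nat.cast_sub hN]
        congr 2; push_cast; ring
      · simp [Set.indicator_apply, ht, ht']
    · simp [Set.indicator_apply, ht]
  rw [h1, Measure.restrict_congr_set Ioo_ae_eq_Ioc, ← ofReal_integral_eq_lintegral_ofReal
    ((intervalIntegral.intervalIntegrable_rpow' (by linarith)).1) ?_,
    ← intervalIntegral.integral_of_le hr, integral_rpow (Or.inl (by linarith))]
  · simp [hc.ne']
  · filter_upwards [ae_restrict_mem measurableSet_Ioc] with t ht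
    exact Real.rpow_nonneg ht.1.le _

theorem hardy_ext (N : ℕ) (hN : 1 ≤ N) (c r : ℝ) (hc : 0 < c) (hr : 0 < r) :
    ∫⁻ x : EuclideanSpace ℝ (Fin N),
      (Set.Ioi r).indicator (fun t => ENNReal.ofReal t ^ (-c - N)) ‖x‖ =
      (N * volume (ball (0 : EuclideanSpace ℝ (Fin N)) 1)) * ENNReal.ofReal (r ^ (-c) / c) := by
  rw [hardy_polar N hN ((Set.Ioi r).indicator fun t => ENNReal.ofReal t ^ (-c - N))
    ((by fun_prop : Measurable fun t : ℝ => ENNReal.ofReal t ^ (-c - N)).indicator measurableSet_Ioi)]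
  congr 1
  have h1 : ∫⁻ t in Set.Ioi (0 : ℝ), ENNReal.ofReal (t ^ (N - 1)) *
      (Set.Ioi r).indicator (fun t => ENNReal.ofReal t ^ (-c - N)) t =
      ∫⁻ t in Set.Ioi r, ENNReal.ofReal (t ^ (-c - 1)) := by
    rw [← lintegral_indicator measurableSet_Ioi, ← lintegral_indicator measurableSet_Ioi]
    apply lintegral_congr
    intro t
    by_cases ht' : r < t
    · have ht : 0 < t := hr.trans ht'
      simp only [Set.indicator_apply, Set.mem_Ioi, ht, ht', if_true]
      rw [ENNReal.ofReal_rpow_of_pos ht, ← ENNReal.ofReal_mul (by positivity),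
        ← Real.rpow_natCast, ← Real.rpow_add ht, Nat.cast_sub hN]
      congr 2; push_cast; ring
    · simp [Set.indicator_apply, ht']
  rw [h1, ← ofReal_integral_eq_lintegral_ofReal
    (integrableOn_Ioi_rpow_of_lt (by linarith) hr) ?_, integral_Ioi_rpow_of_lt (by linarith) hr]
  · congr 1
    rw [show -c - 1 + 1 = -c by ring, neg_div_neg_eq]
  · filter_upwards [ae_restrict_mem measurableSet_Ioi] with t ht
    exact Real.rpow_nonneg (hr.trans ht).le _

/-- power-weight example of the integral Hardy inequality on ℝ^N,
with g(x) = |x|^β, h(x) = |x|^α.  Here S = |𝔖| is the surface measure of the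
unit sphere, characterized by |B(0,1)| = S / N. -/
theorem integral_hardy_inequality_power_weights
    (N : ℕ) (hN : 1 ≤ N) (p q p' α β S : ℝ) (hp : 1 < p) (hpq : p ≤ q)
    (hp' : p' = p / (p - 1))
    (hβ : β + N < 0) (hα : α < N * (p - 1))
    (hbal : q * (α + N) - p * (β + N) = p * q * N)
    (hS : ENNReal.ofReal S = N * volume (ball (0 : EuclideanSpace ℝ (Fin N)) 1))
    (f : EuclideanSpace ℝ (Fin N) → ℂ) (hf : Measurable f) :
    (∫⁻ x : EuclideanSpace ℝ (Fin N),
        (∫⁻ y in ball (0 : EuclideanSpace ℝ (Fin N)) ‖x‖,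
          ENNReal.ofReal ‖f y‖) ^ q * ENNReal.ofReal ‖x‖ ^ β) ^ (1 / q)
      ≤ ENNReal.ofReal (p' ^ (1 / p') * p ^ (1 / q) *
          (S ^ (1 / q + 1 / p') /
            (|β + N| ^ (1 / q) * (α * (1 - p') + N) ^ (1 / p')))) *
        (∫⁻ x : EuclideanSpace ℝ (Fin N),
          ENNReal.ofReal ‖f x‖ ^ p * ENNReal.ofReal ‖x‖ ^ α) ^ (1 / p) := by
  have : Nonempty (Fin N) := ⟨⟨0, hN⟩⟩
  have hp0 : 0 < p := by linarith
  have hp1 : 0 < p - 1 := by linarith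
  have hq0 : 0 < q := by linarith
  have hc : p.HolderConjugate p' := by rw [hp']; exact Real.HolderConjugate.conjExponent hp
  have hp'0 : 0 < p' := hc.symm.pos
  have hNpos : (0 : ℝ) < N := by exact_mod_cast hN
  have hS0 : 0 < S := by
    have h1 : 0 < volume (ball (0 : EuclideanSpace ℝ (Fin N)) 1) := measure_ball_pos _ _ one_pos
    have h2 : 0 < ENNReal.ofReal S := by
      rw [hS]
      exact pos_iff_ne_zero.2 (mul_ne_zero (by exact_mod_cast (by omega : N ≠ 0)) h1.ne')
    exact ENNReal.ofReal_pos.1 h2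
  set a := α * (1 - p') + N with ha
  set b := -(β + N) with hb
  have hb0 : 0 < b := by linarith
  have ha' : a = (N * (p - 1) - α) / (p - 1) := by rw [ha, hp']; field_simp; ring
  have ha0 : 0 < a := by rw [ha']; exact div_pos (by linarith) hp1
  have hab : b / q = a / p' := by
    rw [ha', hp', hb]; field_simp; linarith
  have habs : |β + N| = b := abs_of_neg hβ
  set θ := q / p with hθ
  have hθ1 : 1 ≤ θ := by rw [hθ, le_div_iff₀ hp0]; linarith
  have hθ0 : 0 < θ := by linarith
  set F : EuclideanSpace ℝ (Fin N) → ℝ≥0∞ := fun y => ENNReal.ofReal ‖f y‖ with hF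
  have hFm : Measurable F := by fun_prop
  set u : EuclideanSpace ℝ (Fin N) → ℝ≥0∞ := fun y => ENNReal.ofReal ‖y‖ with hu
  have hum : Measurable u := by fun_prop
  have hu0 : ∀ x, x ≠ 0 → u x ≠ 0 := fun x hx => by simpa [hu] using hx
  have hut : ∀ x, u x ≠ ∞ := fun x => ENNReal.ofReal_ne_top
  have hae : ∀ᵐ x : EuclideanSpace ℝ (Fin N), x ≠ 0 := by
    simp [ae_iff]
  set A := ENNReal.ofReal (S * p' / a) with hA
  set B := ENNReal.ofReal (S * p / b) with hB
  set w : EuclideanSpace ℝ (Fin N) → ℝ≥0∞ := fun y => F y ^ p * u y ^ (α + a / p') with hw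
  have hwm : Measurable w := by fun_prop
  set γ := -(b / p) - N with hγ
  set k : EuclideanSpace ℝ (Fin N) → EuclideanSpace ℝ (Fin N) → ℝ≥0∞ := fun x y =>
    (if ‖y‖ < ‖x‖ then 1 else 0) * (w y * u x ^ (γ / θ)) with hk
  have hkm : Measurable (Function.uncurry k) := by
    have h1 : MeasurableSet {z : EuclideanSpace ℝ (Fin N) × EuclideanSpace ℝ (Fin N) |
        ‖z.2‖ < ‖z.1‖} := measurableSet_lt (by fun_prop) (by fun_prop)
    have h2 : Measurable fun z : EuclideanSpace ℝ (Fin N) × EuclideanSpace ℝ (Fin N) =>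
        (if ‖z.2‖ < ‖z.1‖ then (1 : ℝ≥0∞) else 0) :=
      Measurable.ite h1 measurable_const measurable_const
    exact h2.mul ((hwm.comp measurable_snd).mul ((hum.pow_const _).comp measurable_fst))
  -- inner integral of the kernel in `y`
  have hkG : ∀ x, ∫⁻ y, k x y = (∫⁻ y in ball (0 : EuclideanSpace ℝ (Fin N)) ‖x‖, w y) *
      u x ^ (γ / θ) := by
    intro x
    rw [← lintegral_indicator measurableSet_ball,
      ← lintegral_mul_const _ (hwm.indicator measurableSet_ball)]
    apply lintegral_congr
    intro y
    by_cases hy : ‖y‖ < ‖x‖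
    · rw [Set.indicator_of_mem (by simpa using hy)]; simp [hk, hy]
    · rw [Set.indicator_of_notMem (by simpa using hy)]; simp [hk, hy]
  -- Hoelder
  have hHol : ∀ x, ∫⁻ y in ball (0 : EuclideanSpace ℝ (Fin N)) ‖x‖, F y ≤
      (∫⁻ y in ball (0 : EuclideanSpace ℝ (Fin N)) ‖x‖, w y) ^ (1 / p) *
        (A * u x ^ (a / p')) ^ (1 / p') := by
    intro x
    set c := (α + a / p') / p with hcdef
    have hH := ENNReal.lintegral_mul_le_Lp_mul_Lq
      (volume.restrict (ball (0 : EuclideanSpace ℝ (Fin N)) ‖x‖)) hc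
      (f := fun y => F y * u y ^ c) (g := fun y => u y ^ (-c))
      (by fun_prop) (by fun_prop)
    have e0 : ∫⁻ y in ball (0 : EuclideanSpace ℝ (Fin N)) ‖x‖, F y =
        ∫⁻ y in ball (0 : EuclideanSpace ℝ (Fin N)) ‖x‖,
          ((fun y => F y * u y ^ c) * (fun y => u y ^ (-c))) y := by
      apply lintegral_congr_ae
      filter_upwards [ae_restrict_of_ae hae] with y hy
      simp only [Pi.mul_apply]
      rw [mul_assoc, ← ENNReal.rpow_add _ _ (hu0 y hy) (hut y)]
      simp
    have e1 : ∫⁻ y in ball (0 : EuclideanSpace ℝ (Fin N)) ‖x‖, (F y * u y ^ c) ^ p =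
        ∫⁻ y in ball (0 : EuclideanSpace ℝ (Fin N)) ‖x‖, w y := by
      apply lintegral_congr
      intro y
      rw [ENNReal.mul_rpow_of_nonneg _ _ hp0.le, ← ENNReal.rpow_mul, hcdef,
        div_mul_cancel₀ _ hp0.ne']
    have e2 : ∫⁻ y in ball (0 : EuclideanSpace ℝ (Fin N)) ‖x‖, (u y ^ (-c)) ^ p' =
        A * u x ^ (a / p') := by
      have hexp : -c * p' = a / p' - N := by
        rw [hcdef, ha', hp']; field_simp; ring
      simp_rw [← ENNReal.rpow_mul, hexp]
      rw [hardy_ball N hN (a / p') ‖x‖ (by positivity) (norm_nonneg _), ← hS, hA, hu,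
        ENNReal.ofReal_rpow_of_nonneg (norm_nonneg _) (by positivity),
        ← ENNReal.ofReal_mul hS0.le, ← ENNReal.ofReal_mul (by positivity)]
      congr 1
      field_simp
    rw [e0]
    rw [e1, e2] at hH
    exact hH
  -- pointwise bound
  have hpt : ∀ x, x ≠ 0 → (∫⁻ y in ball (0 : EuclideanSpace ℝ (Fin N)) ‖x‖, F y) ^ q * u x ^ β ≤
      A ^ (q / p') * (∫⁻ y, k x y) ^ θ := by
    intro x hx
    rw [hkG x]
    set G := ∫⁻ y in ball (0 : EuclideanSpace ℝ (Fin N)) ‖x‖, w y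
    calc (∫⁻ y in ball (0 : EuclideanSpace ℝ (Fin N)) ‖x‖, F y) ^ q * u x ^ β
        ≤ (G ^ (1 / p) * (A * u x ^ (a / p')) ^ (1 / p')) ^ q * u x ^ β :=
          mul_le_mul_left (ENNReal.rpow_le_rpow (hHol x) hq0.le) _
      _ = A ^ (q / p') * (G ^ θ * (u x ^ (a / p' * (q / p')) * u x ^ β)) := by
          rw [ENNReal.mul_rpow_of_nonneg _ _ hq0.le, ← ENNReal.rpow_mul, ← ENNReal.rpow_mul,
            ENNReal.mul_rpow_of_nonneg _ _ (by positivity), ← ENNReal.rpow_mul,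
            one_div_mul_eq_div, one_div_mul_eq_div]
          ring
      _ = A ^ (q / p') * (G * u x ^ (γ / θ)) ^ θ := by
          rw [ENNReal.mul_rpow_of_nonneg _ _ hθ0.le, ← ENNReal.rpow_mul,
            ← ENNReal.rpow_add _ _ (hu0 x hx) (hut x), div_mul_cancel₀ _ hθ0.ne']
          congr 3
          rw [← hab, hγ]
          have h1 : b / q * (q / p') = b / p' := by field_simp
          have h2 : b / p + b / p' = b := by
            have := hc.inv_add_inv_eq_one
            rw [div_eq_mul_inv, div_eq_mul_inv, ← mul_add, this, mul_one]
          rw [h1]; linarith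
  -- the dual integral of the kernel in `x`
  have hkx : ∀ y, y ≠ 0 → (∫⁻ x, k x y ^ θ) ^ (1 / θ) = B ^ (1 / θ) * (F y ^ p * u y ^ α) := by
    intro y hy
    have hyn : 0 < ‖y‖ := norm_pos_iff.2 hy
    have e1 : ∀ x, k x y ^ θ = w y ^ θ *
        (Set.Ioi ‖y‖).indicator (fun t => ENNReal.ofReal t ^ (-(b / p) - N)) ‖x‖ := by
      intro x
      by_cases hx : ‖y‖ < ‖x‖
      · rw [Set.indicator_of_mem (by simpa using hx)]
        simp only [hk, hx, if_true, one_mul]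
        rw [ENNReal.mul_rpow_of_nonneg _ _ hθ0.le, ← ENNReal.rpow_mul, div_mul_cancel₀ _ hθ0.ne']
      · rw [Set.indicator_of_notMem (by simpa using hx)]
        simp [hk, hx, hθ0]
    have hm : Measurable fun x : EuclideanSpace ℝ (Fin N) =>
        (Set.Ioi ‖y‖).indicator (fun t => ENNReal.ofReal t ^ (-(b / p) - N)) ‖x‖ :=
      Measurable.comp
        ((by fun_prop : Measurable fun t : ℝ => ENNReal.ofReal t ^ (-(b / p) - N)).indicator
          measurableSet_Ioi) measurable_norm
    rw [lintegral_congr e1, lintegral_const_mul _ hm, hardy_ext N hN (b / p) ‖y‖ (by positivity) hyn, ← hS]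
    have e2 : ENNReal.ofReal S * ENNReal.ofReal (‖y‖ ^ (-(b / p)) / (b / p)) =
        B * u y ^ (-(b / p)) := by
      rw [hB, hu, ENNReal.ofReal_rpow_of_pos hyn,
        ← ENNReal.ofReal_mul hS0.le, ← ENNReal.ofReal_mul (by positivity)]
      congr 1
      field_simp
    rw [e2, ENNReal.mul_rpow_of_nonneg _ _ (by positivity), ← ENNReal.rpow_mul,
      mul_one_div_cancel hθ0.ne', ENNReal.rpow_one,
      ENNReal.mul_rpow_of_nonneg _ _ (by positivity), ← ENNReal.rpow_mul]
    have e3 : u y ^ (α + a / p') * u y ^ (-(b / p) * (1 / θ)) = u y ^ α := by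
      rw [← ENNReal.rpow_add _ _ (hu0 y hy) (hut y)]
      congr 1
      rw [← hab, hθ]; field_simp; ring
    rw [← e3, hw]
    ring
  set I := ∫⁻ x, F x ^ p * u x ^ α with hI
  have hJ : (∫⁻ x, (∫⁻ y, k x y) ^ θ) ^ (1 / θ) ≤ B ^ (1 / θ) * I := by
    refine (hardy_minkowski volume volume θ hθ1 k hkm).trans_eq ?_
    rw [hI, ← lintegral_const_mul _ (by fun_prop)]
    apply lintegral_congr_ae
    filter_upwards [hae] with y hy using hkx y hy
  have hconst : ENNReal.ofReal (p' ^ (1 / p') * p ^ (1 / q) *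
      (S ^ (1 / q + 1 / p') / (|β + N| ^ (1 / q) * a ^ (1 / p')))) =
      A ^ (1 / p') * B ^ (1 / q) := by
    rw [hA, hB, ENNReal.ofReal_rpow_of_pos (by positivity),
      ENNReal.ofReal_rpow_of_pos (by positivity), ← ENNReal.ofReal_mul (by positivity), habs]
    congr 1
    rw [Real.div_rpow (by positivity) hb0.le, Real.div_rpow (by positivity) ha0.le,
      Real.mul_rpow hS0.le hp'0.le, Real.mul_rpow hS0.le hp0.le, Real.rpow_add hS0]
    have := Real.rpow_pos_of_pos hb0 (1 / q)
    have := Real.rpow_pos_of_pos ha0 (1 / p')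
    field_simp
  rw [hconst]
  calc (∫⁻ x, (∫⁻ y in ball (0 : EuclideanSpace ℝ (Fin N)) ‖x‖, F y) ^ q * u x ^ β) ^ (1 / q)
      ≤ (∫⁻ x, A ^ (q / p') * (∫⁻ y, k x y) ^ θ) ^ (1 / q) := by
        apply ENNReal.rpow_le_rpow _ (by positivity)
        apply lintegral_mono_ae
        filter_upwards [hae] with x hx using hpt x hx
    _ = A ^ (1 / p') * ((∫⁻ x, (∫⁻ y, k x y) ^ θ) ^ (1 / θ)) ^ (1 / p) := by
        have hm : Measurable fun x => (∫⁻ y, k x y) ^ θ :=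
          hkm.lintegral_prod_right'.pow_const θ
        rw [lintegral_const_mul _ hm,
          ENNReal.mul_rpow_of_nonneg _ _ (by positivity), ← ENNReal.rpow_mul, ← ENNReal.rpow_mul]
        congr 2
        · field_simp
        · rw [hθ]; field_simp
    _ ≤ A ^ (1 / p') * (B ^ (1 / θ) * I) ^ (1 / p) :=
        mul_le_mul_right (ENNReal.rpow_le_rpow hJ (by positivity)) _
    _ = A ^ (1 / p') * B ^ (1 / q) * I ^ (1 / p) := by
        rw [ENNReal.mul_rpow_of_nonneg _ _ (by positivity), ← ENNReal.rpow_mul,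
          show 1 / θ * (1 / p) = 1 / q by rw [hθ]; field_simp]
        ring
end

section
/- Let N ≥ 1, 1 < p < q < ∞, and s ∈ ℝ with s > −N/p. Let v, z : ℝ^N → [0,∞) be measurable functions, and define C(|x|) = ∫_{B(0,|x|)} v(y) dy and A(x) = ( (1/|B(0,|x|)|) ∫_{B(0,|x|)} ( v(y)^p / z(y) )^{1/(p−1)} dy )^{−q/p'} ( C(|x|)/|B(0,|x|)| )^q v(x). Suppose D₁ (q')^{1/q'} q^{1/q} < 1, where D₁ = sup_{x ≠ 0} [ ( ∫_{ℝ^N \ B(0,|x|)} A(y) C(|y|)^{−q} / |y|^{sq} dy )^{1/q} ( ∫_{B(0,|x|)} ( A(y) v(y)^{−q} / |y|^{sq} )^{1−q'} dy )^{1/q'} ] < ∞. Then there exists a constant C > 0, independent of u, such that for every measurable u : ℝ^N → ℂ with A^{1/q} u / |x|^s ∈ L^p(ℝ^N) ∩ L^q(ℝ^N) and A^{1/q} u / |x|^s not identically zero, one has ∫_{ℝ^N} ( (A(x)^{1/q} |u(x)| / |x|^s)^p / ‖A^{1/q} u / |·|^s‖_{L^p}^p ) log( (A(x)^{1/q} |u(x)|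 / |x|^s)^p / ‖A^{1/q} u / |·|^s‖_{L^p}^p ) dx ≤ ( q/(q−p) ) log( C ( ∫_{ℝ^N} ( ∫_{ℝ^N} |u(x) − u(y)|^p / |x−y|^{N+sp} · z(x) dx )^{q/p} v(y) dy )^{p/q} / ‖A^{1/q} u / |·|^s‖_{L^p}^p ). -/
open MeasureTheory Metric ENNReal

lemma aux_sublevel_s10 {α : Type*} [MeasurableSpace α] (μ : Measure α) (ρ : α → ℝ)
    (hρ : ∀ r, μ {x | ρ x = r} = 0) (c : ℝ≥0∞) :
    μ {x | μ {y | ρ y < ρ x} < c} ≤ c := by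
  set S := {x | μ {y | ρ y < ρ x} < c} with hS
  by_cases hmax : ∃ x ∈ S, ∀ y ∈ S, ρ y ≤ ρ x
  · obtain ⟨x, hx, hmax⟩ := hmax
    have : S ⊆ {y | ρ y < ρ x} ∪ {y | ρ y = ρ x} := by
      intro y hy
      exact lt_or_eq_of_le (hmax y hy)
    calc μ S ≤ μ ({y | ρ y < ρ x} ∪ {y | ρ y = ρ x}) := measure_mono this
      _ ≤ μ {y | ρ y < ρ x} + μ {y | ρ y = ρ x} := measure_union_le _ _
      _ = μ {y | ρ y < ρ x} := by rw [hρ, add_zero]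
      _ ≤ c := le_of_lt hx
  · push Not at hmax
    have hcov : S ⊆ ⋃ r ∈ {r : ℚ | ∃ x ∈ S, (r : ℝ) ≤ ρ x}, {y | ρ y < (r : ℝ)} := by
      intro y hy
      obtain ⟨x, hx, hxy⟩ := hmax y hy
      obtain ⟨r, hr1, hr2⟩ := exists_rat_btwn hxy
      simp only [Set.mem_iUnion]
      exact ⟨r, ⟨x, hx, hr2.le⟩, hr1⟩
    refine (measure_mono hcov).trans ?_
    rw [measure_biUnion_eq_iSup (Set.to_countable _)]
    · refine iSup₂_le ?_
      rintro r ⟨x, hx, hr⟩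
      refine (measure_mono ?_).trans (le_of_lt hx)
      intro y hy
      exact lt_of_lt_of_le hy hr
    · rintro a ha b hb
      rcases le_total a b with h | h
      · refine ⟨b, hb, fun y hy => ?_, fun y hy => hy⟩
        have hy' : ρ y < (a : ℝ) := hy
        have h' : (a : ℝ) ≤ (b : ℝ) := by exact_mod_cast h
        exact lt_of_lt_of_le hy' h'
      · refine ⟨a, ha, fun y hy => hy, fun y hy => ?_⟩
        have hy' : ρ y < (b : ℝ) := hy
        have h' : (b : ℝ) ≤ (a : ℝ) := by exact_mod_cast h
        exact lt_of_lt_of_le hy' h'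

lemma aux_ne_zero {α : Type*} [MeasurableSpace α] (μ : Measure α) (f : α → ℝ≥0∞)
    (hfc : ∀ c, μ {x | f x < c} ≤ c) : ∀ᵐ x ∂μ, f x ≠ 0 := by
  rw [ae_iff]
  refine le_antisymm (ENNReal.le_of_forall_pos_le_add fun ε hε _ => ?_) bot_le
  rw [zero_add]
  refine (measure_mono ?_).trans (hfc ε)
  intro x hx
  simp only [ne_eq, not_not, Set.mem_ofPred_eq] at hx ⊢
  rw [hx]; exact_mod_cast hε

lemma aux_chain {α : Type*} [MeasurableSpace α] (μ : Measure α) (f : α → ℝ≥0∞)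
    (hf : Measurable f) (hfc : ∀ c, μ {x | f x < c} ≤ c) (a : ℝ) (ha0 : 0 < a) (ha1 : a < 1)
    (m : ℝ≥0∞) (hm : μ Set.univ ≤ m) :
    ∫⁻ x, f x ^ (-a) ∂μ ≤ ENNReal.ofReal (1 / (1 - a)) * m ^ (1 - a) := by
  have h1a : 0 < 1 - a := by linarith
  rcases eq_or_ne m ∞ with rfl | hmt
  · rw [ENNReal.top_rpow_of_pos h1a, ENNReal.mul_top]
    · exact le_top
    · simpa using ha1
  rcases eq_or_ne m 0 with rfl | hm0
  · have : μ = 0 := by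
      rw [← Measure.measure_univ_eq_zero]; exact le_antisymm hm bot_le
    simp [this]
  have hf0 : ∀ᵐ x ∂μ, f x ≠ 0 := aux_ne_zero μ f hfc
  have e1 : ∫⁻ x, f x ^ (-a) ∂μ = ∫⁻ x, ENNReal.ofReal ((f x ^ (-a)).toReal) ∂μ := by
    refine lintegral_congr_ae ?_
    filter_upwards [hf0] with x hx
    rw [ENNReal.ofReal_toReal]
    intro h
    rw [ENNReal.rpow_eq_top_iff] at h
    rcases h with h | h
    · exact hx h.1
    · linarith [h.2]
  rw [e1, lintegral_eq_lintegral_meas_lt μ (Filter.Eventually.of_forall fun x => ENNReal.toReal_nonneg)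
    ((hf.pow_const _).ennreal_toReal.aemeasurable)]
  set M := m.toReal with hM
  have hMpos : 0 < M := ENNReal.toReal_pos hm0 hmt
  have hmM : m = ENNReal.ofReal M := (ENNReal.ofReal_toReal hmt).symm
  set τ := M ^ (-a) with hτ
  have hτpos : 0 < τ := Real.rpow_pos_of_pos hMpos _
  have hmeas : ∀ t : ℝ, 0 < t → μ {x | t < (f x ^ (-a)).toReal} ≤ ENNReal.ofReal (t ^ (-(1/a))) := by
    intro t ht
    refine (measure_mono ?_).trans (hfc _)
    intro x hx
    simp only [Set.mem_ofPred_eq] at hx ⊢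
    have hx1 : ENNReal.ofReal t < f x ^ (-a) := by
      rw [ENNReal.ofReal_lt_iff_lt_toReal ht.le]
      · exact hx
      · intro h; rw [h] at hx; simp at hx; linarith
    by_contra hcon
    push Not at hcon
    have : f x ^ (-a) ≤ ENNReal.ofReal t := by
      rw [ENNReal.rpow_neg, ENNReal.inv_le_iff_inv_le, ← ENNReal.ofReal_inv_of_pos ht]
      calc ENNReal.ofReal t⁻¹ = (ENNReal.ofReal (t ^ (-(1/a)))) ^ a := by
            rw [ENNReal.ofReal_rpow_of_pos (Real.rpow_pos_of_pos ht _), ← Real.rpow_mul ht.le]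
            congr 1
            rw [show -(1/a) * a = -1 by field_simp, Real.rpow_neg_one]
        _ ≤ f x ^ a := ENNReal.rpow_le_rpow hcon ha0.le
    exact absurd hx1 (not_lt.mpr this)
  have hint : ∫ t in Set.Ioi τ, t ^ (-(1/a)) = a / (1 - a) * M ^ (1 - a) := by
    have h1 : -(1/a) < -1 := by
      rw [neg_lt_neg_iff, lt_div_iff₀ ha0]; linarith
    rw [integral_Ioi_rpow_of_lt h1 hτpos, hτ, ← Real.rpow_mul hMpos.le]
    have : -a * (-(1/a) + 1) = 1 - a := by field_simp; ring
    rw [this]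
    have : -(1/a) + 1 = -((1 - a)/a) := by field_simp; ring
    rw [this]
    field_simp
  calc ∫⁻ t in Set.Ioi 0, μ {x | t < (f x ^ (-a)).toReal}
      ≤ ∫⁻ t in Set.Ioc 0 τ ∪ Set.Ioi τ, μ {x | t < (f x ^ (-a)).toReal} := by
        rw [Set.Ioc_union_Ioi_eq_Ioi hτpos.le]
    _ ≤ (∫⁻ t in Set.Ioc 0 τ, μ {x | t < (f x ^ (-a)).toReal})
        + ∫⁻ t in Set.Ioi τ, μ {x | t < (f x ^ (-a)).toReal} := lintegral_union_le _ _ _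
    _ ≤ (∫⁻ t in Set.Ioc 0 τ, m) + ∫⁻ t in Set.Ioi τ, ENNReal.ofReal (t ^ (-(1/a))) := by
        refine add_le_add ?_ ?_
        · exact lintegral_mono fun t => (measure_mono (Set.subset_univ _)).trans hm
        · refine setLIntegral_mono' measurableSet_Ioi fun t ht => hmeas t (hτpos.trans ht)
    _ = m * ENNReal.ofReal τ + ENNReal.ofReal (a / (1 - a) * M ^ (1 - a)) := by
        congr 1
        · simp
        · rw [← hint, ofReal_integral_eq_lintegral_ofReal]
          · refine integrableOn_Ioi_rpow_of_lt ?_ hτpos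
            rw [neg_lt_neg_iff, lt_div_iff₀ ha0]; linarith
          · refine (ae_restrict_mem measurableSet_Ioi).mono fun t ht => ?_
            exact Real.rpow_nonneg (hτpos.trans ht).le _
    _ = ENNReal.ofReal (1 / (1 - a)) * m ^ (1 - a) := by
        rw [hmM, ENNReal.ofReal_rpow_of_pos hMpos, ← ENNReal.ofReal_mul hMpos.le,
          ← ENNReal.ofReal_mul (by positivity), ← ENNReal.ofReal_add (by positivity) (by positivity)]
        congr 1
        have : M * τ = M ^ (1 - a) := by
          rw [hτ, sub_eq_add_neg, Real.rpow_add hMpos, Real.rpow_one]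
        rw [this]; field_simp; ring

lemma aux_hardy {α : Type*} [MeasurableSpace α] (μ : Measure α) [SFinite μ] (ρ : α → ℝ)
    (hρm : Measurable ρ) (hρ : ∀ r, μ {x | ρ x = r} = 0) (q q' : ℝ)
    (hqq : q.HolderConjugate q') (U w g : α → ℝ≥0∞) (hU : Measurable U) (hw : Measurable w)
    (hg : Measurable g) (D : ℝ≥0∞) (hDt : D ≠ ∞)
    (hD : ∀ᵐ x ∂μ, (∫⁻ y in {y | ρ x ≤ ρ y}, U y ∂μ) ^ (1 / q) *
      (∫⁻ y in {y | ρ y < ρ x}, w y ^ (1 - q') ∂μ) ^ (1 / q') ≤ D)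
    (hfin : ∫⁻ x, w x * g x ^ q ∂μ ≠ ∞) :
    ∫⁻ y, U y * (∫⁻ x in {x | ρ x < ρ y}, g x ∂μ) ^ q ∂μ ≤
      ENNReal.ofReal q' ^ (q / q') * ENNReal.ofReal q * D ^ q * ∫⁻ x, w x * g x ^ q ∂μ := by
  have hq1 : 1 < q := hqq.lt
  have hq'1 : 1 < q' := hqq.symm.lt
  have hq0 : 0 < q := by linarith
  have hq'0 : 0 < q' := by linarith
  have hinv : 1 / q + 1 / q' = 1 := by
    have := hqq.inv_add_inv_eq_one; simpa [one_div] using this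
  have hiq0 : 0 < 1 / q := by positivity
  have hiq'0 : 0 < 1 / q' := by positivity
  have hB : ∀ r, MeasurableSet {x | ρ x < r} := fun r => measurableSet_lt hρm measurable_const
  have hB' : ∀ r, MeasurableSet {x | r ≤ ρ x} := fun r => measurableSet_le measurable_const hρm
  have hB'' : ∀ r, MeasurableSet {x | r < ρ x} := fun r => measurableSet_lt measurable_const hρm
  set σ : α → ℝ≥0∞ := fun x => w x ^ (1 - q') with hσ
  have hσm : Measurable σ := hw.pow_const _
  set V : α → ℝ≥0∞ := fun x => ∫⁻ y in {y | ρ y < ρ x}, σ y ∂μ with hV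
  set T : α → ℝ≥0∞ := fun x => ∫⁻ y in {y | ρ x ≤ ρ y}, U y ∂μ with hT
  have hVm : Measurable V := by
    have : Monotone (fun r : ℝ => ∫⁻ y in {y | ρ y < r}, σ y ∂μ) := fun a b hab =>
      lintegral_mono_set fun y (hy : ρ y < a) => lt_of_lt_of_le hy hab
    exact this.measurable.comp hρm
  have hTm : Measurable T := by
    have : Antitone (fun r : ℝ => ∫⁻ y in {y | r ≤ ρ y}, U y ∂μ) := fun a b hab =>
      lintegral_mono_set fun y (hy : b ≤ ρ y) => le_trans hab hy
    exact this.measurable.comp hρm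
  have hVsub : ∀ c, (μ.withDensity σ) {x | V x < c} ≤ c := by
    intro c
    have := aux_sublevel_s10 (μ.withDensity σ) ρ
      (fun r => withDensity_absolutelyContinuous μ σ (hρ r)) c
    simpa only [withDensity_apply _ (hB _)] using this
  have hTsub : ∀ c, (μ.withDensity U) {x | T x < c} ≤ c := by
    intro c
    have := aux_sublevel_s10 (μ.withDensity U) (fun x => - ρ x)
      (fun r => withDensity_absolutelyContinuous μ U (by
        have := hρ (-r)
        convert this using 3
        ext x
        constructor <;> intro h <;> linarith)) c
    refine (measure_mono ?_).trans this
    intro x hx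
    refine lt_of_le_of_lt ?_ (show T x < c from hx)
    simp only [neg_lt_neg_iff]
    rw [withDensity_apply _ (hB'' _)]
    exact lintegral_mono_set fun y (hy : ρ x < ρ y) => hy.le
  have hVne : ∀ᵐ x ∂μ, σ x ≠ 0 → V x ≠ 0 :=
    (ae_withDensity_iff hσm).1 (aux_ne_zero _ _ hVsub)
  have hTne : ∀ᵐ x ∂μ, U x ≠ 0 → T x ≠ 0 :=
    (ae_withDensity_iff hU).1 (aux_ne_zero _ _ hTsub)
  have hchV : ∀ y, ∫⁻ x in {x | ρ x < ρ y}, σ x * V x ^ (-(1 / q)) ∂μ ≤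
      ENNReal.ofReal q' * V y ^ (1 / q') := by
    intro y
    have := aux_chain ((μ.withDensity σ).restrict {x | ρ x < ρ y}) V hVm
      (fun c => (Measure.restrict_apply_le _ _).trans (hVsub c)) (1 / q) hiq0 (by linarith) (V y)
      (by rw [Measure.restrict_apply_univ, withDensity_apply _ (hB _)])
    rw [setLIntegral_withDensity_eq_setLIntegral_mul _ hσm (hVm.pow_const _) (hB _)] at this
    have e : 1 - 1 / q = 1 / q' := by linarith
    rw [e, one_div_one_div] at this
    exact this
  have hchT : ∀ x, ∫⁻ y in {y | ρ x < ρ y}, U y * T y ^ (-(1 / q')) ∂μ ≤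
      ENNReal.ofReal q * T x ^ (1 / q) := by
    intro x
    have := aux_chain ((μ.withDensity U).restrict {y | ρ x < ρ y}) T hTm
      (fun c => (Measure.restrict_apply_le _ _).trans (hTsub c)) (1 / q') hiq'0 (by linarith) (T x)
      (by
        rw [Measure.restrict_apply_univ, withDensity_apply _ (hB'' _)]
        exact lintegral_mono_set fun y (hy : ρ x < ρ y) => hy.le)
    rw [setLIntegral_withDensity_eq_setLIntegral_mul _ hU (hTm.pow_const _) (hB'' _)] at this
    have e : 1 - 1 / q' = 1 / q := by linarith
    rw [e, one_div_one_div] at this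
    exact this
  set G : α → ℝ≥0∞ := fun x => w x * g x ^ q * V x ^ (1 / q') with hG
  have hGm : Measurable G := (hw.mul (hg.pow_const _)).mul (hVm.pow_const _)
  have hwg : ∀ᵐ x ∂μ, w x * g x ^ q ≠ ∞ := by
    filter_upwards [ae_lt_top (hw.mul (hg.pow_const q)) hfin] with x hx using hx.ne
  set Q : ℝ≥0∞ := ENNReal.ofReal q' ^ (q / q') with hQ
  have key : ∀ᵐ y ∂μ, U y ≠ 0 → (∫⁻ x in {x | ρ x < ρ y}, g x ∂μ) ^ q ≤
      Q * D ^ (q / q') * T y ^ (-(1 / q')) * ∫⁻ x in {x | ρ x < ρ y}, G x ∂μ := by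
    filter_upwards [hTne, hD] with y hTy hDy hUy
    have hTy := hTy hUy
    have hVT : V y ^ (1 / q') ≤ D / T y ^ (1 / q) := by
      rw [ENNReal.le_div_iff_mul_le]
      · rw [mul_comm]; exact hDy
      · left
        simp only [ne_eq, ENNReal.rpow_eq_zero_iff, not_or, not_and, not_lt]
        exact ⟨fun h => absurd h hTy, fun _ => hiq0.le⟩
      · right; exact hDt
    have hVy : V y ≠ ∞ := by
      intro h
      rw [h, ENNReal.top_rpow_of_pos hiq'0, top_le_iff] at hVT
      rw [ENNReal.div_eq_top] at hVT
      rcases hVT with h | h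
      · rw [ENNReal.rpow_eq_zero_iff] at h
        rcases h.2 with h | h
        · exact hTy h.1
        · linarith [h.2]
      · exact hDt h.1
    have hσfin : ∀ᵐ x ∂(μ.restrict {x | ρ x < ρ y}), σ x < ∞ := ae_lt_top hσm hVy
    have hpt : ∀ᵐ x ∂(μ.restrict {x | ρ x < ρ y}), g x ≤
        (fun x => (w x ^ (1 / q) * g x * V x ^ (1 / (q * q')))) x *
        (fun x => (w x ^ (-(1 / q)) * V x ^ (-(1 / (q * q'))))) x := by
      filter_upwards [hσfin, ae_restrict_of_ae hVne, ae_restrict_of_ae hwg,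
        ae_restrict_mem (hB (ρ y))] with x h1 h2 h3 h4
      rcases eq_or_ne (g x) 0 with hg0 | hg0
      · simp [hg0]
      have hw0 : w x ≠ 0 := by
        intro h
        simp only [hσ, h] at h1
        rw [ENNReal.zero_rpow_of_neg (by linarith)] at h1
        exact lt_irrefl _ h1
      have hwt : w x ≠ ∞ := by
        intro h
        apply h3
        rw [h, ENNReal.top_mul]
        simp [hg0, hq0.le]
      have hσ0 : σ x ≠ 0 := by
        simp only [hσ, ne_eq, ENNReal.rpow_eq_zero_iff, not_or, not_and]
        exact ⟨fun h => absurd h hw0, fun h => absurd h hwt⟩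
      have hVx0 := h2 hσ0
      have hVxt : V x ≠ ∞ := by
        refine ne_top_of_le_ne_top hVy ?_
        exact lintegral_mono_set fun z (hz : ρ z < ρ x) => hz.trans h4
      have e1 : w x ^ (1 / q) * w x ^ (-(1 / q)) = 1 := by
        rw [← ENNReal.rpow_add _ _ hw0 hwt]; simp
      have e2 : V x ^ (1 / (q * q')) * V x ^ (-(1 / (q * q'))) = 1 := by
        rw [← ENNReal.rpow_add _ _ hVx0 hVxt]; simp
      apply le_of_eq
      calc g x = g x * (w x ^ (1 / q) * w x ^ (-(1 / q))) *
            (V x ^ (1 / (q * q')) * V x ^ (-(1 / (q * q')))) := by rw [e1, e2]; simp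
        _ = _ := by ring
    have hHol := ENNReal.lintegral_mul_le_Lp_mul_Lq (μ.restrict {x | ρ x < ρ y}) hqq
      (f := fun x => (w x ^ (1 / q) * g x * V x ^ (1 / (q * q'))))
      (g := fun x => (w x ^ (-(1 / q)) * V x ^ (-(1 / (q * q')))))
      (by fun_prop) (by fun_prop)
    have hHol2 := (lintegral_mono_ae hpt).trans hHol
    have e1 : ∀ x, (w x ^ (1 / q) * g x * V x ^ (1 / (q * q'))) ^ q = G x := by
      intro x
      simp only [hG]
      rw [ENNReal.mul_rpow_of_nonneg _ _ hq0.le, ENNReal.mul_rpow_of_nonneg _ _ hq0.le,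
        ← ENNReal.rpow_mul, ← ENNReal.rpow_mul]
      congr 2
      · rw [one_div_mul_cancel hq0.ne', ENNReal.rpow_one]
      · field_simp
    have e2 : ∀ x, (w x ^ (-(1 / q)) * V x ^ (-(1 / (q * q')))) ^ q' =
        σ x * V x ^ (-(1 / q)) := by
      intro x
      simp only [hσ]
      rw [ENNReal.mul_rpow_of_nonneg _ _ hq'0.le,
        ← ENNReal.rpow_mul, ← ENNReal.rpow_mul]
      congr 2
      · have : 1 / q = 1 - 1 / q' := by linarith
        rw [this]; field_simp; ring
      · field_simp
    simp only [e1, e2] at hHol2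
    have h3 : ∫⁻ x in {x | ρ x < ρ y}, g x ∂μ ≤ (∫⁻ x in {x | ρ x < ρ y}, G x ∂μ) ^ (1 / q) *
        (ENNReal.ofReal q' * (D / T y ^ (1 / q))) ^ (1 / q') := by
      refine hHol2.trans ?_
      gcongr
      exact (hchV y).trans (by gcongr)
    calc (∫⁻ x in {x | ρ x < ρ y}, g x ∂μ) ^ q ≤ ((∫⁻ x in {x | ρ x < ρ y}, G x ∂μ) ^ (1 / q) *
        (ENNReal.ofReal q' * (D / T y ^ (1 / q))) ^ (1 / q')) ^ q :=
          ENNReal.rpow_le_rpow h3 hq0.le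
      _ = _ := by
        rw [div_eq_mul_inv D, ← ENNReal.rpow_neg,
          ENNReal.mul_rpow_of_nonneg _ _ hq0.le, ← ENNReal.rpow_mul, ← ENNReal.rpow_mul,
          one_div_mul_cancel hq0.ne', ENNReal.rpow_one, one_div_mul_eq_div,
          ENNReal.mul_rpow_of_nonneg _ _ (by positivity),
          ENNReal.mul_rpow_of_nonneg _ _ (by positivity), ← ENNReal.rpow_mul]
        have : -(1 / q) * (q / q') = -(1 / q') := by field_simp
        rw [this]; ring
  have hGs : ∀ y, ∫⁻ x in {x | ρ x < ρ y}, G x ∂μ =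
      ∫⁻ x, ({x | ρ x < ρ y} : Set α).indicator G x ∂μ := fun y => (lintegral_indicator (hB _) _).symm
  have hset : MeasurableSet {z : α × α | ρ z.2 < ρ z.1} :=
    measurableSet_lt (hρm.comp measurable_snd) (hρm.comp measurable_fst)
  set k : α → α → ℝ≥0∞ := fun y x => ({z : α × α | ρ z.2 < ρ z.1}).indicator
    (fun z => U z.1 * T z.1 ^ (-(1 / q')) * G z.2) (y, x) with hk
  have hkm : Measurable (Function.uncurry k) := by
    refine Measurable.indicator ?_ hset
    exact ((hU.comp measurable_fst).mul ((hTm.comp measurable_fst).pow_const _)).mul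
      (hGm.comp measurable_snd)
  have step1 : ∀ y, U y * T y ^ (-(1 / q')) * ∫⁻ x in {x | ρ x < ρ y}, G x ∂μ =
      ∫⁻ x, k y x ∂μ := by
    intro y
    rw [← lintegral_const_mul _ hGm, ← lintegral_indicator (hB _)]
    rfl
  have step2 : ∀ x, ∫⁻ y, k y x ∂μ = G x * ∫⁻ y in {y | ρ x < ρ y}, U y * T y ^ (-(1 / q')) ∂μ := by
    intro x
    rw [← lintegral_const_mul (f := fun y => U y * T y ^ (-(1 / q'))) _
      (hU.mul (hTm.pow_const _)), ← lintegral_indicator (hB'' _)]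
    refine lintegral_congr fun y => ?_
    simp only [hk, Set.indicator, Set.mem_ofPred_eq]
    split_ifs <;> ring
  calc ∫⁻ y, U y * (∫⁻ x in {x | ρ x < ρ y}, g x ∂μ) ^ q ∂μ
      ≤ ∫⁻ y, Q * D ^ (q / q') *
          (U y * T y ^ (-(1 / q')) * ∫⁻ x in {x | ρ x < ρ y}, G x ∂μ) ∂μ := by
        refine lintegral_mono_ae ?_
        filter_upwards [key] with y hy
        rcases eq_or_ne (U y) 0 with h | h
        · simp [h]
        · calc _ ≤ U y * (Q * D ^ (q / q') * T y ^ (-(1 / q')) * ∫⁻ x in {x | ρ x < ρ y}, G x ∂μ) := by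
                gcongr; exact hy h
            _ = _ := by ring
    _ = ∫⁻ y, Q * D ^ (q / q') * ∫⁻ x, k y x ∂μ ∂μ := by simp only [step1]
    _ = Q * D ^ (q / q') * ∫⁻ y, ∫⁻ x, k y x ∂μ ∂μ :=
        lintegral_const_mul _ hkm.lintegral_prod_right'
    _ = Q * D ^ (q / q') * ∫⁻ x, ∫⁻ y, k y x ∂μ ∂μ := by
        rw [lintegral_lintegral_swap hkm.aemeasurable]
    _ ≤ Q * D ^ (q / q') * ∫⁻ x, (ENNReal.ofReal q * D) * (w x * g x ^ q) ∂μ := by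
        refine mul_le_mul_right (lintegral_mono_ae ?_) _
        filter_upwards [hD] with x hx
        rw [step2]
        calc _ ≤ G x * (ENNReal.ofReal q * T x ^ (1 / q)) := by gcongr; exact hchT x
          _ = ENNReal.ofReal q * (T x ^ (1 / q) * V x ^ (1 / q')) * (w x * g x ^ q) := by
            simp only [hG]; ring
          _ ≤ _ := by gcongr
    _ = _ := by
        rw [lintegral_const_mul (f := fun x => w x * g x ^ q) _ (hw.mul (hg.pow_const _))]
        have : D ^ q = D ^ (q / q') * D := by
          conv_rhs => rw [← ENNReal.rpow_one D, ← ENNReal.rpow_mul]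
          rw [← ENNReal.rpow_add_of_nonneg _ _ (by positivity) zero_le_one]
          congr 1
          have : 1 / q' = 1 - 1 / q := by linarith
          rw [one_mul, div_eq_mul_one_div, this]; field_simp; ring
        rw [this]; ring

lemma aux_entropy {α : Type*} [MeasurableSpace α] (μ : Measure α) (Φ : α → ℝ≥0∞)
    (hΦ : Measurable Φ) (p q : ℝ) (hp : 0 < p) (hpq : p < q)
    (hP : ∫⁻ x, Φ x ^ p ∂μ ≠ ∞) (hQ : ∫⁻ x, Φ x ^ q ∂μ ≠ ∞) (hne : ¬ (∀ᵐ x ∂μ, Φ x = 0))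
    (Ip : ℝ) (hIp : Ip = (∫⁻ x, Φ x ^ p ∂μ).toReal) (X : ℝ≥0∞)
    (hX : (∫⁻ x, Φ x ^ q ∂μ) ^ (p / q) ≤ X) :
    ((∫⁻ x, ENNReal.ofReal (((Φ x).toReal ^ p / Ip) *
              Real.log ((Φ x).toReal ^ p / Ip)) ∂μ : ℝ≥0∞) : EReal)
          - ((∫⁻ x, ENNReal.ofReal
            (-(((Φ x).toReal ^ p / Ip) *
              Real.log ((Φ x).toReal ^ p / Ip))) ∂μ : ℝ≥0∞) : EReal)
        ≤ (((q / (q - p)) : ℝ) : EReal) * ENNReal.log (X / ENNReal.ofReal Ip) := by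
  have hq : 0 < q := hp.trans hpq
  have hqp : 0 < q - p := by linarith
  have hpow0 : ∀ r : ℝ, 0 < r → ∫⁻ x, Φ x ^ r ∂μ ≠ 0 := by
    intro r hr h
    rw [lintegral_eq_zero_iff (hΦ.pow_const _)] at h
    apply hne
    filter_upwards [h] with x hx
    simpa [ENNReal.rpow_eq_zero_iff, hr, hr.le, hr.not_gt] using hx
  have hIp0 : 0 < Ip := by rw [hIp]; exact ENNReal.toReal_pos (hpow0 p hp) hP
  set Iq := (∫⁻ x, Φ x ^ q ∂μ).toReal with hIq
  have hIq0 : 0 < Iq := ENNReal.toReal_pos (hpow0 q hq) hQ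
  have hint : ∀ r : ℝ, ∫⁻ x, Φ x ^ r ∂μ ≠ ∞ → Integrable (fun x => (Φ x).toReal ^ r) μ := by
    intro r hr
    have := integrable_toReal_of_lintegral_ne_top (hΦ.pow_const r).aemeasurable hr
    simpa only [ENNReal.toReal_rpow] using this
  have hval : ∀ r : ℝ, ∫⁻ x, Φ x ^ r ∂μ ≠ ∞ →
      ∫ x, (Φ x).toReal ^ r ∂μ = (∫⁻ x, Φ x ^ r ∂μ).toReal := by
    intro r hr
    have := integral_toReal (hΦ.pow_const r).aemeasurable (ae_lt_top (hΦ.pow_const r) hr)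
    simpa only [ENNReal.toReal_rpow] using this
  set t : α → ℝ := fun x => (Φ x).toReal ^ p / Ip with ht
  have ht0 : ∀ x, 0 ≤ t x := fun x => by
    have : 0 ≤ (Φ x).toReal := ENNReal.toReal_nonneg
    simp only [ht]; positivity
  set Y := Iq / Ip ^ (q / p) with hY
  have hY0 : 0 < Y := by positivity
  set ψ : α → ℝ := fun x => (p / (q - p)) * (t x ^ (q / p) / Y + (Real.log Y - 1) * t x) with hψ
  have htq : ∀ x, t x ^ (q / p) = (Φ x).toReal ^ q / Ip ^ (q / p) := by
    intro x
    simp only [ht]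
    rw [Real.div_rpow (Real.rpow_nonneg ENNReal.toReal_nonneg _) hIp0.le,
      ← Real.rpow_mul ENNReal.toReal_nonneg]
    congr 2; field_simp
  have hti : Integrable t μ := (hint p hP).div_const _
  have htqi : Integrable (fun x => t x ^ (q / p)) μ := by
    simp only [htq]; exact (hint q hQ).div_const _
  have hψi : Integrable ψ μ := ((htqi.div_const _).add (hti.const_mul _)).const_mul _
  have hψv : ∫ x, ψ x ∂μ = (q / (q - p)) * Real.log (Iq ^ (p / q) / Ip) := by
    simp only [hψ]
    rw [integral_const_mul, integral_add (htqi.div_const _) (hti.const_mul _), integral_const_mul,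
      integral_div]
    have e1 : ∫ x, t x ∂μ = 1 := by
      simp only [ht]
      rw [integral_div, hval p hP, ← hIp, div_self hIp0.ne']
    have e2 : ∫ x, t x ^ (q / p) ∂μ = Y := by
      simp only [htq]
      rw [integral_div, hval q hQ]
    rw [e1, e2, div_self hY0.ne']
    have e3 : Real.log Y = (q / p) * Real.log (Iq ^ (p / q) / Ip) := by
      rw [hY, Real.log_div hIq0.ne' (by positivity), Real.log_div (by positivity) hIp0.ne',
        Real.log_rpow hIp0, Real.log_rpow hIq0]
      field_simp
    rw [e3]; field_simp; ring
  have hle : ∀ x, t x * Real.log (t x) ≤ ψ x := by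
    intro x
    rcases (ht0 x).eq_or_lt with h | h
    · simp only [hψ]
      rw [← h, Real.zero_rpow (by positivity)]
      simp
    · have h1 := Real.log_le_sub_one_of_pos (x := t x ^ ((q - p) / p) / Y) (by positivity)
      rw [Real.log_div (by positivity) hY0.ne', Real.log_rpow h] at h1
      have h2 : Real.log (t x) ≤ (p / (q - p)) * (t x ^ ((q - p) / p) / Y + (Real.log Y - 1)) := by
        have h3 : (q - p) / p * Real.log (t x) ≤ t x ^ ((q - p) / p) / Y + (Real.log Y - 1) := by
          linarith
        calc Real.log (t x) = (p / (q - p)) * ((q - p) / p * Real.log (t x)) := by field_simp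
          _ ≤ _ := by gcongr
      have h4 : t x ^ (q / p) = t x * t x ^ ((q - p) / p) := by
        rw [← Real.rpow_one_add' h.le (by positivity)]
        congr 1; field_simp; ring
      calc t x * Real.log (t x) ≤ t x * ((p / (q - p)) * (t x ^ ((q - p) / p) / Y + (Real.log Y - 1))) := by
            gcongr
        _ = ψ x := by simp only [hψ]; rw [h4]; ring
  have hφm : Measurable (fun x => t x * Real.log (t x)) := by
    have : Measurable t := (hΦ.ennreal_toReal.pow_const _).div_const _
    exact this.mul (Real.measurable_log.comp this)
  set a := ∫⁻ x, ENNReal.ofReal (t x * Real.log (t x)) ∂μ with ha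
  set b := ∫⁻ x, ENNReal.ofReal (-(t x * Real.log (t x))) ∂μ with hb
  have hat : a ≠ ∞ := by
    have h1 : a ≤ ∫⁻ x, ENNReal.ofReal (ψ x) ∂μ :=
      lintegral_mono fun x => ENNReal.ofReal_le_ofReal (hle x)
    have h2 : ∫⁻ x, ENNReal.ofReal (ψ x) ∂μ < ∞ := by
      have := hψi.hasFiniteIntegral
      refine lt_of_le_of_lt (lintegral_mono fun x => ?_) this
      rw [← ofReal_norm]
      exact ENNReal.ofReal_le_ofReal (Real.le_norm_self _)
    exact (h1.trans_lt h2).ne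
  have hXY : ((Real.log (Iq ^ (p / q) / Ip) : ℝ) : EReal) ≤ ENNReal.log (X / ENNReal.ofReal Ip) := by
    have h1 : ENNReal.ofReal (Iq ^ (p / q) / Ip) ≤ X / ENNReal.ofReal Ip := by
      rw [ENNReal.ofReal_div_of_pos hIp0, ← ENNReal.ofReal_rpow_of_pos hIq0, hIq,
        ENNReal.ofReal_toReal hQ]
      gcongr
    have h2 := ENNReal.log_monotone h1
    rwa [ENNReal.log_ofReal, if_neg (by push Not; positivity)] at h2
  have hmul : (((q / (q - p)) * Real.log (Iq ^ (p / q) / Ip) : ℝ) : EReal) ≤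
      (((q / (q - p)) : ℝ) : EReal) * ENNReal.log (X / ENNReal.ofReal Ip) := by
    rw [EReal.coe_mul]
    exact mul_le_mul_of_nonneg_left hXY (by exact_mod_cast (by positivity))
  refine le_trans ?_ hmul
  by_cases hbt : b = ∞
  · rw [hbt]
    have : (a : EReal) = ((a.toReal : ℝ) : EReal) := (EReal.coe_ennreal_toReal hat).symm
    rw [this]
    simp
  · have hφi : Integrable (fun x => t x * Real.log (t x)) μ := by
      refine ⟨hφm.aestronglyMeasurable, ?_⟩
      have : ∫⁻ x, ‖t x * Real.log (t x)‖ₑ ∂μ ≤ a + b := by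
        rw [ha, hb, ← lintegral_add_left hφm.ennreal_ofReal]
        refine lintegral_mono fun x => ?_
        rw [← ofReal_norm, Real.norm_eq_abs]
        rcases abs_cases (t x * Real.log (t x)) with h | h <;> rw [h.1]
        · exact le_self_add
        · exact le_add_self
      exact this.trans_lt (ENNReal.add_lt_top.2 ⟨lt_top_iff_ne_top.2 hat, lt_top_iff_ne_top.2 hbt⟩)
    have h1 := integral_eq_lintegral_pos_part_sub_lintegral_neg_part hφi
    have h2 : ∫ x, t x * Real.log (t x) ∂μ ≤ ∫ x, ψ x ∂μ := integral_mono hφi hψi hle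
    rw [h1, hψv] at h2
    rw [← EReal.coe_ennreal_toReal hat, ← EReal.coe_ennreal_toReal hbt, ← EReal.coe_sub]
    exact_mod_cast h2

lemma aux_alg (n p q p' s : ℝ) (hp : 0 < p) (hq : 0 < q) (hp' : 0 < p')
    (hpp : 1 / p + 1 / p' = 1) (β M K r ω v A L I J g a : ℝ≥0∞)
    (hβ : β = r ^ n * ω) (hr0 : r ≠ 0) (hrt : r ≠ ∞) (hω0 : ω ≠ 0) (hωt : ω ≠ ∞)
    (hM0 : M ≠ 0) (hMt : M ≠ ∞) (hK0 : K ≠ 0) (hKt : K ≠ ∞) (hns : 0 ≤ n + s * p)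
    (hA : A = (β⁻¹ * M) ^ (-(q / p')) * (K / β) ^ q * v)
    (hJ : J ≤ I ^ (1 / p) * M ^ (1 / p')) (hI : I ≤ (2 * r) ^ (n + s * p) * L)
    (ha : a * K ≤ J + g) :
    A ^ (1 / q) * a / r ^ s ≤
      (2 ^ ((n + s * p) / p) * ω ^ (-(1 / p))) * v ^ (1 / q) * L ^ (1 / p) +
      (A / (K ^ q * r ^ (s * q))) ^ (1 / q) * g := by
  have hβ0 : β ≠ 0 := by
    rw [hβ]; exact mul_ne_zero (by simp [ENNReal.rpow_eq_zero_iff, hr0, hrt]) hω0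
  have hβt : β ≠ ∞ := by
    rw [hβ]; exact ENNReal.mul_ne_top (by simp [ENNReal.rpow_eq_top_iff, hr0, hrt]) hωt
  have hrs0 : r ^ s ≠ 0 := by simp [ENNReal.rpow_eq_zero_iff, hr0, hrt]
  have hrst : r ^ s ≠ ∞ := by simp [ENNReal.rpow_eq_top_iff, hr0, hrt]
  have hAq : A ^ (1 / q) = β ^ (-(1 / p)) * M ^ (-(1 / p')) * K * v ^ (1 / q) := by
    rw [hA, ENNReal.mul_rpow_of_nonneg _ _ (by positivity),
      ENNReal.mul_rpow_of_nonneg _ _ (by positivity), ← ENNReal.rpow_mul, ← ENNReal.rpow_mul,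
      mul_one_div_cancel hq.ne', ENNReal.rpow_one]
    have e1 : -(q / p') * (1 / q) = -(1 / p') := by field_simp
    rw [e1, ENNReal.mul_rpow_of_ne_zero (by simpa using hβt) hM0, ENNReal.inv_rpow,
      ENNReal.rpow_neg, inv_inv]
    have e2 : β ^ (-(1 / p)) = β ^ (1 / p') * β⁻¹ := by
      rw [← ENNReal.rpow_neg_one, ← ENNReal.rpow_add _ _ hβ0 hβt]
      congr 1; linarith
    rw [e2, div_eq_mul_inv K]; ring
  have hUq : (A / (K ^ q * r ^ (s * q))) ^ (1 / q) = A ^ (1 / q) * K⁻¹ * (r ^ s)⁻¹ := by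
    rw [ENNReal.div_rpow_of_nonneg _ _ (by positivity),
      ENNReal.mul_rpow_of_nonneg _ _ (by positivity), ← ENNReal.rpow_mul, ← ENNReal.rpow_mul,
      mul_one_div_cancel hq.ne', ENNReal.rpow_one]
    have e1 : s * q * (1 / q) = s := by field_simp
    rw [e1, div_eq_mul_inv, ENNReal.mul_inv (Or.inl hK0) (Or.inl hKt)]
    ring
  have ha' : a ≤ (J + g) * K⁻¹ := by
    rw [← div_eq_mul_inv, ENNReal.le_div_iff_mul_le (Or.inl hK0) (Or.inl hKt)]
    exact ha
  have hJ' : J ≤ ((2 * r) ^ (n + s * p) * L) ^ (1 / p) * M ^ (1 / p') := hJ.trans (by gcongr)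
  have hKK : K * K⁻¹ = 1 := ENNReal.mul_inv_cancel hK0 hKt
  have hMM : M ^ (-(1 / p')) * M ^ (1 / p') = 1 := by
    rw [← ENNReal.rpow_add _ _ hM0 hMt]; simp
  have hc : β ^ (-(1 / p)) * (r ^ s)⁻¹ * ((2 * r) ^ (n + s * p)) ^ (1 / p) =
      2 ^ ((n + s * p) / p) * ω ^ (-(1 / p)) := by
    rw [hβ, ENNReal.mul_rpow_of_ne_top (by simp [ENNReal.rpow_eq_top_iff, hr0, hrt]) hωt,
      ← ENNReal.rpow_mul, ← ENNReal.rpow_mul, mul_one_div,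
      ENNReal.mul_rpow_of_nonneg _ _ (by positivity), ← ENNReal.rpow_neg]
    have : r ^ (n * -(1 / p)) * r ^ (-s) * r ^ ((n + s * p) / p) = 1 := by
      rw [← ENNReal.rpow_add _ _ hr0 hrt, ← ENNReal.rpow_add _ _ hr0 hrt]
      have : n * -(1 / p) + -s + (n + s * p) / p = 0 := by field_simp; ring
      rw [this, ENNReal.rpow_zero]
    calc _ = (r ^ (n * -(1 / p)) * r ^ (-s) * r ^ ((n + s * p) / p)) *
          (2 ^ ((n + s * p) / p) * ω ^ (-(1 / p))) := by ring
      _ = _ := by rw [this, one_mul]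
  rw [hUq, div_eq_mul_inv (A ^ (1 / q) * a)]
  calc A ^ (1 / q) * a * (r ^ s)⁻¹ ≤ A ^ (1 / q) * ((J + g) * K⁻¹) * (r ^ s)⁻¹ := by gcongr
    _ = A ^ (1 / q) * K⁻¹ * (r ^ s)⁻¹ * J + A ^ (1 / q) * K⁻¹ * (r ^ s)⁻¹ * g := by ring
    _ ≤ _ := by
      refine add_le_add ?_ le_rfl
      calc A ^ (1 / q) * K⁻¹ * (r ^ s)⁻¹ * J
          ≤ A ^ (1 / q) * K⁻¹ * (r ^ s)⁻¹ *
            (((2 * r) ^ (n + s * p) * L) ^ (1 / p) * M ^ (1 / p')) := by gcongr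
        _ = (K * K⁻¹) * (M ^ (-(1 / p')) * M ^ (1 / p')) *
            (β ^ (-(1 / p)) * (r ^ s)⁻¹ * ((2 * r) ^ (n + s * p)) ^ (1 / p)) *
            v ^ (1 / q) * L ^ (1 / p) := by
            rw [hAq, ENNReal.mul_rpow_of_nonneg _ _ (by positivity)]; ring
        _ = _ := by rw [hKK, hMM, hc, one_mul, one_mul]

lemma aux_K (q q' D : ℝ) (hq : 1 < q) (hq'0 : 1 < q')
    (hsmall : D * q' ^ (1 / q') * q ^ (1 / q) < 1) :
    ENNReal.ofReal q' ^ (q / q') * ENNReal.ofReal q * ENNReal.ofReal D ^ q < 1 := by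
  have hq0 : 0 < q := by linarith
  have hq'0 : 0 < q' := by linarith
  rcases le_or_gt D 0 with hD | hD
  · rw [ENNReal.ofReal_of_nonpos hD, ENNReal.zero_rpow_of_pos hq0]; simp
  · rw [ENNReal.ofReal_rpow_of_pos hq'0, ENNReal.ofReal_rpow_of_pos hD,
      ← ENNReal.ofReal_mul (by positivity), ← ENNReal.ofReal_mul (by positivity)]
    have e : q' ^ (q / q') * q * D ^ q = (D * q' ^ (1 / q') * q ^ (1 / q)) ^ q := by
      rw [Real.mul_rpow (by positivity) (by positivity),
        Real.mul_rpow (by positivity) (by positivity), ← Real.rpow_mul hq'0.le,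
        ← Real.rpow_mul hq0.le, one_div_mul_cancel hq0.ne', Real.rpow_one, one_div_mul_eq_div]
      ring
    rw [e, ENNReal.ofReal_lt_one]
    exact Real.rpow_lt_one (by positivity) hsmall hq0

/-- logarithmic fractional Hardy–Sobolev type inequality on ℝ^N
(Euclidean case of homogeneous Lie groups, Q = N).  Here Φ = A^{1/q}|u|/|x|^s
(as an ℝ≥0∞-valued function), the L^p ∩ L^q membership and non-vanishing of Φ
are the stated hypotheses, the entropy on the left is encoded in `EReal` as the
difference of the lower integrals of the positive and negative parts, and the
logarithm on the right is the `ENNReal.log : ℝ≥0∞ → EReal`, so that an infinite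
right-hand side is treated correctly. -/
theorem logarithmic_fractional_hardy_sobolev_inequality
    (N : ℕ) (hN : 1 ≤ N) (p q p' q' s S : ℝ) (hp : 1 < p) (hpq : p < q)
    (hs : -(N / p) < s)
    (hp' : p' = p / (p - 1)) (hq' : q' = q / (q - 1))
    (hS : ENNReal.ofReal S = N * volume (ball (0 : EuclideanSpace ℝ (Fin N)) 1))
    (v z : EuclideanSpace ℝ (Fin N) → ℝ)
    (hv_meas : Measurable v) (hz_meas : Measurable z)
    (hv_nonneg : ∀ x, 0 ≤ v x) (hz_nonneg : ∀ x, 0 ≤ z x)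
    (Cv A : EuclideanSpace ℝ (Fin N) → ℝ≥0∞)
    (hCv : ∀ x, Cv x = ∫⁻ y in ball (0 : EuclideanSpace ℝ (Fin N)) ‖x‖,
        ENNReal.ofReal (v y))
    (hA : ∀ x, A x =
        ((volume (ball (0 : EuclideanSpace ℝ (Fin N)) ‖x‖))⁻¹ *
          ∫⁻ y in ball (0 : EuclideanSpace ℝ (Fin N)) ‖x‖,
            (ENNReal.ofReal (v y) ^ p / ENNReal.ofReal (z y)) ^ (1 / (p - 1)))
          ^ (-(q / p')) *
        (Cv x / volume (ball (0 : EuclideanSpace ℝ (Fin N)) ‖x‖)) ^ q *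
        ENNReal.ofReal (v x))
    (D₁ : ℝ)
    (hD₁ : (⨆ x : {x : EuclideanSpace ℝ (Fin N) // x ≠ 0},
        (∫⁻ y in (ball (0 : EuclideanSpace ℝ (Fin N)) ‖x.1‖)ᶜ,
            A y / (Cv y ^ q * ENNReal.ofReal ‖y‖ ^ (s * q))) ^ (1 / q) *
        (∫⁻ y in ball (0 : EuclideanSpace ℝ (Fin N)) ‖x.1‖,
            (A y / (ENNReal.ofReal (v y) ^ q *
              ENNReal.ofReal ‖y‖ ^ (s * q))) ^ (1 - q')) ^ (1 / q'))
        = ENNReal.ofReal D₁)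
    (hsmall : D₁ * q' ^ (1 / q') * q ^ (1 / q) < 1) :
    ∃ C : ℝ, 0 < C ∧
      ∀ (u : EuclideanSpace ℝ (Fin N) → ℂ)
        (Φ : EuclideanSpace ℝ (Fin N) → ℝ≥0∞) (Ip : ℝ),
        Measurable u →
        (∀ x, Φ x = A x ^ (1 / q) * ENNReal.ofReal ‖u x‖ /
            ENNReal.ofReal ‖x‖ ^ s) →
        (∫⁻ x, Φ x ^ p) ≠ ∞ → (∫⁻ x, Φ x ^ q) ≠ ∞ →
        ¬ (∀ᵐ x, Φ x = 0) →
        Ip = (∫⁻ x, Φ x ^ p).toReal →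
        ((∫⁻ x, ENNReal.ofReal
            (((Φ x).toReal ^ p / Ip) *
              Real.log ((Φ x).toReal ^ p / Ip)) : ℝ≥0∞) : EReal)
          - ((∫⁻ x, ENNReal.ofReal
            (-(((Φ x).toReal ^ p / Ip) *
              Real.log ((Φ x).toReal ^ p / Ip))) : ℝ≥0∞) : EReal)
        ≤ (((q / (q - p)) : ℝ) : EReal) *
            ENNReal.log (ENNReal.ofReal C *
              (∫⁻ y, (∫⁻ x,
                  ENNReal.ofReal ‖u x - u y‖ ^ p /
                    ENNReal.ofReal ‖x - y‖ ^ ((N : ℝ) + s * p) *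
                    ENNReal.ofReal (z x)) ^ (q / p) *
                ENNReal.ofReal (v y)) ^ (p / q) /
              ENNReal.ofReal Ip) := by
  have hp0 : 0 < p := by linarith
  have hq1 : 1 < q := by linarith
  have hq0 : 0 < q := by linarith
  have hpc : p.HolderConjugate p' := by
    rw [hp']; exact Real.HolderConjugate.conjExponent hp
  have hqc : q.HolderConjugate q' := by
    rw [hq']; exact Real.HolderConjugate.conjExponent hq1
  have hp'0 : 0 < p' := by linarith [hpc.symm.lt]
  have hpp : 1 / p + 1 / p' = 1 := by
    have := hpc.inv_add_inv_eq_one; simpa [one_div] using this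
  have hns : 0 < (N : ℝ) + s * p := by
    have h1 : -(N / p) * p < s * p := by gcongr
    have h2 : -((N : ℝ) / p) * p = -N := by field_simp
    linarith
  haveI : Nonempty (Fin N) := ⟨⟨0, hN⟩⟩
  haveI : Nontrivial (EuclideanSpace ℝ (Fin N)) := by
    apply Module.nontrivial_of_finrank_pos (R := ℝ)
    rw [finrank_euclideanSpace_fin]; exact hN
  have hball : ∀ x : EuclideanSpace ℝ (Fin N), ball (0 : EuclideanSpace ℝ (Fin N)) ‖x‖ =
      {y | ‖y‖ < ‖x‖} := fun x => by ext y; simp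
  have hballc : ∀ x : EuclideanSpace ℝ (Fin N), (ball (0 : EuclideanSpace ℝ (Fin N)) ‖x‖)ᶜ =
      {y | ‖x‖ ≤ ‖y‖} := fun x => by ext y; simp
  have hBm : ∀ h : EuclideanSpace ℝ (Fin N) → ℝ≥0∞,
      Measurable (fun x : EuclideanSpace ℝ (Fin N) =>
        ∫⁻ y in ball (0 : EuclideanSpace ℝ (Fin N)) ‖x‖, h y) := by
    intro h
    have : Monotone (fun r : ℝ => ∫⁻ y in ball (0 : EuclideanSpace ℝ (Fin N)) r, h y) :=
      fun a b hab => lintegral_mono_set (ball_subset_ball hab)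
    exact this.measurable.comp measurable_norm
  have hβm : Measurable (fun x : EuclideanSpace ℝ (Fin N) =>
        volume (ball (0 : EuclideanSpace ℝ (Fin N)) ‖x‖)) := by
    have : Monotone (fun r : ℝ => volume (ball (0 : EuclideanSpace ℝ (Fin N)) r)) :=
      fun a b hab => measure_mono (ball_subset_ball hab)
    exact this.measurable.comp measurable_norm
  have hCvm : Measurable Cv := by
    rw [funext hCv]; exact hBm _
  have hnm : Measurable (fun x : EuclideanSpace ℝ (Fin N) => ENNReal.ofReal ‖x‖) :=
    measurable_norm.ennreal_ofReal
  have hvm : Measurable (fun x => ENNReal.ofReal (v x)) := hv_meas.ennreal_ofReal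
  have hzm : Measurable (fun x => ENNReal.ofReal (z x)) := hz_meas.ennreal_ofReal
  set m : EuclideanSpace ℝ (Fin N) → ℝ≥0∞ := fun y =>
    (ENNReal.ofReal (v y) ^ p / ENNReal.ofReal (z y)) ^ (1 / (p - 1)) with hm
  have hmm : Measurable m := ((hvm.pow_const _).div hzm).pow_const _
  have hAm : Measurable A := by
    rw [funext hA]
    exact ((((hβm.inv).mul (hBm _)).pow_const _).mul ((hCvm.div hβm).pow_const _)).mul hvm
  set ω := volume (ball (0 : EuclideanSpace ℝ (Fin N)) 1) with hω
  have hω0 : ω ≠ 0 := (measure_ball_pos volume _ one_pos).ne'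
  have hωt : ω ≠ ∞ := measure_ball_lt_top.ne
  have hβ : ∀ x : EuclideanSpace ℝ (Fin N), volume (ball (0 : EuclideanSpace ℝ (Fin N)) ‖x‖) =
      ENNReal.ofReal ‖x‖ ^ (N : ℝ) * ω := by
    intro x
    rw [Measure.addHaar_ball volume _ (norm_nonneg x), finrank_euclideanSpace_fin,
      ENNReal.ofReal_pow (norm_nonneg x), ENNReal.rpow_natCast]
  have hsph : ∀ r, volume {x : EuclideanSpace ℝ (Fin N) | ‖x‖ = r} = 0 := by
    intro r
    have := Measure.addHaar_sphere (volume : Measure (EuclideanSpace ℝ (Fin N))) 0 r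
    convert this using 2
    ext x; simp
  have hae0 : ∀ᵐ x : EuclideanSpace ℝ (Fin N), x ≠ 0 := by
    have := hsph 0
    rw [ae_iff]; simpa using this
  set U : EuclideanSpace ℝ (Fin N) → ℝ≥0∞ := fun y =>
    A y / (Cv y ^ q * ENNReal.ofReal ‖y‖ ^ (s * q)) with hU
  have hUm : Measurable U := hAm.div ((hCvm.pow_const _).mul (hnm.pow_const _))
  set w : EuclideanSpace ℝ (Fin N) → ℝ≥0∞ := fun y =>
    A y / (ENNReal.ofReal (v y) ^ q * ENNReal.ofReal ‖y‖ ^ (s * q)) with hw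
  have hwm : Measurable w := hAm.div ((hvm.pow_const _).mul (hnm.pow_const _))
  have hD : ∀ᵐ x : EuclideanSpace ℝ (Fin N), (∫⁻ y in {y | ‖x‖ ≤ ‖y‖}, U y) ^ (1 / q) *
      (∫⁻ y in {y | ‖y‖ < ‖x‖}, w y ^ (1 - q')) ^ (1 / q') ≤ ENNReal.ofReal D₁ := by
    filter_upwards [hae0] with x hx
    rw [← hD₁, ← hball, ← hballc]
    exact le_iSup_of_le (⟨x, hx⟩ : {x : EuclideanSpace ℝ (Fin N) // x ≠ 0}) le_rfl
  set K : ℝ≥0∞ := ENNReal.ofReal q' ^ (q / q') * ENNReal.ofReal q * ENNReal.ofReal D₁ ^ q with hK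
  have hK1 : K < 1 := aux_K q q' D₁ hq1 hqc.symm.lt hsmall
  set κ := K ^ (1 / q) with hκ
  have hκ1 : κ < 1 := by
    have := ENNReal.rpow_lt_rpow hK1 (z := 1 / q) (by positivity)
    rw [ENNReal.one_rpow] at this; exact this
  have hκ0 : 1 - κ ≠ 0 := (tsub_pos_of_lt hκ1).ne'
  have hκt : 1 - κ ≠ ∞ := ne_top_of_le_ne_top ENNReal.one_ne_top tsub_le_self
  set c : ℝ≥0∞ := 2 ^ (((N : ℝ) + s * p) / p) * ω ^ (-(1 / p)) with hc
  have hc0 : c ≠ 0 := mul_ne_zero (by simp [ENNReal.rpow_eq_zero_iff])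
    (by simp [ENNReal.rpow_eq_zero_iff, hω0, hωt])
  have hct : c ≠ ∞ := ENNReal.mul_ne_top (by simp [ENNReal.rpow_eq_top_iff])
    (by simp [ENNReal.rpow_eq_top_iff, hω0, hωt])
  have hd0 : c / (1 - κ) ≠ 0 := (ENNReal.div_pos hc0 hκt).ne'
  have hdt : c / (1 - κ) ≠ ∞ := ENNReal.div_ne_top hct hκ0
  have hC0 : (c / (1 - κ)) ^ p ≠ 0 := by simp [ENNReal.rpow_eq_zero_iff, hd0, hdt]
  have hCt : (c / (1 - κ)) ^ p ≠ ∞ := by simp [ENNReal.rpow_eq_top_iff, hd0, hdt]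
  refine ⟨((c / (1 - κ)) ^ p).toReal, ENNReal.toReal_pos hC0 hCt, ?_⟩
  intro u Φ Ip hu hΦ hPfin hQfin hne hIp
  rw [ENNReal.ofReal_toReal hCt]
  have hum : Measurable (fun x => ENNReal.ofReal ‖u x‖) := hu.norm.ennreal_ofReal
  have hΦm : Measurable Φ := by
    rw [funext hΦ]
    exact ((hAm.pow_const _).mul hum).div (hnm.pow_const _)
  refine aux_entropy volume Φ hΦm p q hp0 hpq hPfin hQfin hne Ip hIp _ ?_
  set L : EuclideanSpace ℝ (Fin N) → ℝ≥0∞ := fun y => ∫⁻ x,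
    ENNReal.ofReal ‖u x - u y‖ ^ p / ENNReal.ofReal ‖x - y‖ ^ ((N : ℝ) + s * p) *
      ENNReal.ofReal (z x) with hL
  have hLm : Measurable L := by
    have hk : Measurable (fun k : EuclideanSpace ℝ (Fin N) × EuclideanSpace ℝ (Fin N) =>
        ENNReal.ofReal ‖u k.1 - u k.2‖ ^ p /
          ENNReal.ofReal ‖k.1 - k.2‖ ^ ((N : ℝ) + s * p) * ENNReal.ofReal (z k.1)) := by
      refine Measurable.mul (Measurable.div ?_ ?_) (hzm.comp measurable_fst)
      · exact ((hu.comp measurable_fst).sub (hu.comp measurable_snd)).norm.ennreal_ofReal.pow_const _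
      · exact (measurable_fst.sub measurable_snd).norm.ennreal_ofReal.pow_const _
    exact hk.lintegral_prod_left'
  set g : EuclideanSpace ℝ (Fin N) → ℝ≥0∞ := fun x =>
    ENNReal.ofReal ‖u x‖ * ENNReal.ofReal (v x) with hg
  have hgm : Measurable g := hum.mul hvm
  have hr0 : ∀ y : EuclideanSpace ℝ (Fin N), y ≠ 0 → ENNReal.ofReal ‖y‖ ≠ 0 := by
    intro y hy; simpa using hy
  have hwg : ∫⁻ x, w x * g x ^ q ≤ ∫⁻ x, Φ x ^ q := by
    refine lintegral_mono_ae ?_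
    filter_upwards [hae0] with x hx
    have hr := hr0 x hx
    have e : Φ x ^ q = A x * ENNReal.ofReal ‖u x‖ ^ q / ENNReal.ofReal ‖x‖ ^ (s * q) := by
      rw [hΦ, ENNReal.div_rpow_of_nonneg _ _ hq0.le, ENNReal.mul_rpow_of_nonneg _ _ hq0.le,
        ← ENNReal.rpow_mul, ← ENNReal.rpow_mul, one_div_mul_cancel hq0.ne', ENNReal.rpow_one]
    rw [e]
    simp only [hw, hg]
    rw [ENNReal.mul_rpow_of_nonneg _ _ hq0.le]
    rcases eq_or_ne (ENNReal.ofReal (v x)) 0 with h | h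
    · rw [h, ENNReal.zero_rpow_of_pos hq0]; simp
    · have h1 : ENNReal.ofReal (v x) ^ q ≠ 0 := by simp [ENNReal.rpow_eq_zero_iff, hq0.le, hq0.not_gt, h]
      have h2 : ENNReal.ofReal (v x) ^ q ≠ ∞ :=
        ENNReal.rpow_ne_top_of_nonneg hq0.le ENNReal.ofReal_ne_top
      rw [div_eq_mul_inv (A x), ENNReal.mul_inv (Or.inl h1) (Or.inl h2),
        div_eq_mul_inv (A x * ENNReal.ofReal ‖u x‖ ^ q)]
      apply le_of_eq
      calc _ = (ENNReal.ofReal (v x) ^ q * (ENNReal.ofReal (v x) ^ q)⁻¹) *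
          (A x * ENNReal.ofReal ‖u x‖ ^ q * (ENNReal.ofReal ‖x‖ ^ (s * q))⁻¹) := by ring
        _ = _ := by rw [ENNReal.mul_inv_cancel h1 h2, one_mul]
  have hhardy := aux_hardy volume (fun x : EuclideanSpace ℝ (Fin N) => ‖x‖) measurable_norm hsph
    q q' hqc U w g hUm hwm hgm (ENNReal.ofReal D₁) ENNReal.ofReal_ne_top hD
    (ne_top_of_le_ne_top hQfin hwg)
  simp only [← hball] at hhardy
  have hpoint : ∀ᵐ y, Φ y ≤ ((fun y => c * ENNReal.ofReal (v y) ^ (1 / q) * L y ^ (1 / p)) +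
      (fun y => U y ^ (1 / q) * ∫⁻ x in ball (0 : EuclideanSpace ℝ (Fin N)) ‖y‖, g x)) y := by
    filter_upwards [hae0, ae_lt_top (hΦm.pow_const q) hQfin] with y hy hΦt
    have hr := hr0 y hy
    have hrt : ENNReal.ofReal ‖y‖ ≠ ∞ := ENNReal.ofReal_ne_top
    have hrs0 : ENNReal.ofReal ‖y‖ ^ s ≠ 0 := by simp [ENNReal.rpow_eq_zero_iff, hy]
    have hrst : ENNReal.ofReal ‖y‖ ^ s ≠ ∞ := by simp [ENNReal.rpow_eq_top_iff, hy]
    have hβ0 : volume (ball (0 : EuclideanSpace ℝ (Fin N)) ‖y‖) ≠ 0 :=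
      (measure_ball_pos volume _ (norm_pos_iff.2 hy)).ne'
    have hβt : volume (ball (0 : EuclideanSpace ℝ (Fin N)) ‖y‖) ≠ ∞ := measure_ball_lt_top.ne
    rcases eq_or_ne (A y) 0 with hA0 | hA0
    · rw [hΦ, hA0, ENNReal.zero_rpow_of_pos (by positivity)]; simp
    rcases eq_or_ne (A y) ∞ with hAt | hAt
    · rcases eq_or_ne (ENNReal.ofReal ‖u y‖) 0 with h | h
      · rw [hΦ, h]; simp
      · exfalso
        have : Φ y = ∞ := by
          rw [hΦ, hAt, ENNReal.top_rpow_of_pos (by positivity), ENNReal.top_mul h,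
            ENNReal.top_div_of_ne_top hrst]
        rw [this, ENNReal.top_rpow_of_pos hq0] at hΦt
        exact lt_irrefl _ hΦt
    set M := ∫⁻ x in ball (0 : EuclideanSpace ℝ (Fin N)) ‖y‖, m x with hM
    have hAy : A y = ((volume (ball (0 : EuclideanSpace ℝ (Fin N)) ‖y‖))⁻¹ * M) ^ (-(q / p')) *
        (Cv y / volume (ball (0 : EuclideanSpace ℝ (Fin N)) ‖y‖)) ^ q *
        ENNReal.ofReal (v y) := hA y
    have hneg : -(q / p') < 0 := by
      have : 0 < q / p' := by positivity
      linarith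
    have hv0 : ENNReal.ofReal (v y) ≠ 0 := by
      intro h; apply hA0; rw [hAy, h, mul_zero]
    have hC0 : Cv y ≠ 0 := by
      intro h; apply hA0; rw [hAy, h, ENNReal.zero_div, ENNReal.zero_rpow_of_pos hq0]; simp
    have hMt : M ≠ ∞ := by
      intro h; apply hA0
      rw [hAy, h, ENNReal.mul_top (by simpa using hβt), ENNReal.top_rpow_of_neg hneg]; simp
    have hM0 : M ≠ 0 := by
      intro h
      apply hC0
      rw [hM, lintegral_eq_zero_iff hmm] at h
      rw [hCv, lintegral_eq_zero_iff hvm]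
      filter_upwards [h] with x hx
      simp only [hm, Pi.zero_apply] at hx ⊢
      rw [ENNReal.rpow_eq_zero_iff_of_pos (by
        have : 0 < p - 1 := by linarith
        positivity), ENNReal.div_eq_zero_iff] at hx
      rcases hx with hx | hx
      · rwa [ENNReal.rpow_eq_zero_iff_of_pos hp0] at hx
      · exact absurd hx ENNReal.ofReal_ne_top
    have hCt' : Cv y ≠ ∞ := by
      intro h; apply hAt
      rw [hAy, h, ENNReal.top_div_of_ne_top hβt, ENNReal.top_rpow_of_pos hq0, ENNReal.mul_top,
        ENNReal.top_mul hv0]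
      rw [ne_eq, ENNReal.rpow_eq_zero_iff]
      rintro (⟨_, h⟩ | ⟨h, _⟩)
      · linarith
      · exact ENNReal.mul_ne_top (by simpa using hβ0) hMt h
    rw [hΦ, Pi.add_apply]
    refine aux_alg N p q p' s hp0 hq0 hp'0 hpp _ M (Cv y) (ENNReal.ofReal ‖y‖) ω
      (ENNReal.ofReal (v y)) (A y) (L y)
      (∫⁻ x in ball (0 : EuclideanSpace ℝ (Fin N)) ‖y‖,
        ENNReal.ofReal ‖u x - u y‖ ^ p * ENNReal.ofReal (z x))
      (∫⁻ x in ball (0 : EuclideanSpace ℝ (Fin N)) ‖y‖,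
        ENNReal.ofReal ‖u x - u y‖ * ENNReal.ofReal (v x))
      (∫⁻ x in ball (0 : EuclideanSpace ℝ (Fin N)) ‖y‖, g x) (ENNReal.ofReal ‖u y‖)
      (hβ y) hr hrt hω0 hωt hM0 hMt hC0 hCt' hns.le hAy ?_ ?_ ?_
    · have hdm : Measurable (fun x => ENNReal.ofReal ‖u x - u y‖) :=
        (hu.sub_const _).norm.ennreal_ofReal
      have hH := ENNReal.lintegral_mul_le_Lp_mul_Lq
        (volume.restrict (ball (0 : EuclideanSpace ℝ (Fin N)) ‖y‖)) hpc
        (f := fun x => ENNReal.ofReal ‖u x - u y‖ * ENNReal.ofReal (z x) ^ (1 / p))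
        (g := fun x => (ENNReal.ofReal (v x) ^ p / ENNReal.ofReal (z x)) ^ (1 / p))
        (hdm.mul (hzm.pow_const _)).aemeasurable
        (((hvm.pow_const _).div hzm).pow_const _).aemeasurable
      have e1 : ∀ x, (ENNReal.ofReal ‖u x - u y‖ * ENNReal.ofReal (z x) ^ (1 / p)) ^ p =
          ENNReal.ofReal ‖u x - u y‖ ^ p * ENNReal.ofReal (z x) := by
        intro x
        rw [ENNReal.mul_rpow_of_nonneg _ _ hp0.le, ← ENNReal.rpow_mul,
          one_div_mul_cancel hp0.ne', ENNReal.rpow_one]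
      have e2 : ∀ x, ((ENNReal.ofReal (v x) ^ p / ENNReal.ofReal (z x)) ^ (1 / p)) ^ p' = m x := by
        intro x
        simp only [hm]
        rw [← ENNReal.rpow_mul]
        congr 1
        have : p - 1 ≠ 0 := by linarith
        rw [hp']; field_simp
      simp only [e1, e2] at hH
      refine le_trans (lintegral_mono_ae ?_) hH
      filter_upwards [ae_lt_top hmm hMt] with x hx
      simp only [Pi.mul_apply]
      rcases eq_or_ne (ENNReal.ofReal (v x)) 0 with h | h
      · rw [h]; simp
      have hz0 : ENNReal.ofReal (z x) ≠ 0 := by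
        intro h'
        simp only [hm] at hx
        rw [h', ENNReal.div_zero, ENNReal.top_rpow_of_pos] at hx
        · exact lt_irrefl _ hx
        · have : 0 < p - 1 := by linarith
          positivity
        · rwa [ne_eq, ENNReal.rpow_eq_zero_iff_of_pos hp0]
      rw [mul_assoc, ← ENNReal.mul_rpow_of_nonneg _ _ (by positivity),
        ENNReal.mul_div_cancel hz0 ENNReal.ofReal_ne_top, ← ENNReal.rpow_mul,
        mul_one_div_cancel hp0.ne', ENNReal.rpow_one]
    · simp only [hL]
      rw [← lintegral_const_mul' _ _ (ENNReal.rpow_ne_top_of_nonneg hns.le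
        (ENNReal.mul_ne_top ENNReal.ofNat_ne_top hrt))]
      refine le_trans ?_ (setLIntegral_le_lintegral (ball 0 ‖y‖) _)
      refine setLIntegral_mono' measurableSet_ball fun x hx => ?_
      have hx' : ‖x‖ < ‖y‖ := by simpa using hx
      have hxy : x - y ≠ 0 := by
        intro h; rw [sub_eq_zero] at h; rw [h] at hx'; exact lt_irrefl _ hx'
      set d := ENNReal.ofReal ‖x - y‖ ^ ((N : ℝ) + s * p) with hd
      have hd0 : d ≠ 0 := by
        rw [hd, ne_eq, ENNReal.rpow_eq_zero_iff_of_pos hns]; exact hr0 _ hxy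
      have hdt : d ≠ ∞ := ENNReal.rpow_ne_top_of_nonneg hns.le ENNReal.ofReal_ne_top
      have hdle : d ≤ (2 * ENNReal.ofReal ‖y‖) ^ ((N : ℝ) + s * p) := by
        refine ENNReal.rpow_le_rpow ?_ hns.le
        have e2 : (2 : ℝ≥0∞) * ENNReal.ofReal ‖y‖ = ENNReal.ofReal (2 * ‖y‖) := by
          rw [ENNReal.ofReal_mul (by norm_num)]; simp
        rw [e2]
        refine ENNReal.ofReal_le_ofReal ?_
        have := norm_sub_le x y
        linarith
      calc ENNReal.ofReal ‖u x - u y‖ ^ p * ENNReal.ofReal (z x)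
          = d * (ENNReal.ofReal ‖u x - u y‖ ^ p / d * ENNReal.ofReal (z x)) := by
            rw [← mul_assoc, ENNReal.mul_div_cancel hd0 hdt]
        _ ≤ _ := by gcongr
    · rw [hCv, ← lintegral_const_mul _ hvm]
      have hdm : Measurable (fun x => ENNReal.ofReal ‖u x - u y‖) :=
        (hu.sub_const _).norm.ennreal_ofReal
      rw [← lintegral_add_left
        (f := fun x => ENNReal.ofReal ‖u x - u y‖ * ENNReal.ofReal (v x)) (hdm.mul hvm)]
      refine lintegral_mono fun x => ?_
      change ENNReal.ofReal ‖u y‖ * ENNReal.ofReal (v x) ≤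
        ENNReal.ofReal ‖u x - u y‖ * ENNReal.ofReal (v x) +
          ENNReal.ofReal ‖u x‖ * ENNReal.ofReal (v x)
      rw [← add_mul, ← ENNReal.ofReal_add (norm_nonneg _) (norm_nonneg _)]
      gcongr
      have h1 := norm_sub_le (u x) (u x - u y)
      have h2 : u x - (u x - u y) = u y := by ring
      rw [h2] at h1
      linarith
  set Nq := (∫⁻ x, Φ x ^ q) ^ (1 / q) with hNq
  set R := ∫⁻ y, L y ^ (q / p) * ENNReal.ofReal (v y) with hR
  have hNt : Nq ≠ ∞ := ENNReal.rpow_ne_top_of_nonneg (by positivity) hQfin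
  have hmain : Nq ≤ c * R ^ (1 / q) + κ * Nq := by
    have h1 : Nq ≤ (∫⁻ y, ((fun y => c * ENNReal.ofReal (v y) ^ (1 / q) * L y ^ (1 / p)) +
      (fun y => U y ^ (1 / q) * ∫⁻ x in ball (0 : EuclideanSpace ℝ (Fin N)) ‖y‖, g x)) y ^ q)
        ^ (1 / q) := by
      refine ENNReal.rpow_le_rpow (lintegral_mono_ae ?_) (by positivity)
      filter_upwards [hpoint] with y hy using ENNReal.rpow_le_rpow hy hq0.le
    refine (h1.trans (ENNReal.lintegral_Lp_add_le
      (((hvm.pow_const _).const_mul c).mul (hLm.pow_const _)).aemeasurable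
      ((hUm.pow_const _).mul (hBm g)).aemeasurable hq1.le)).trans ?_
    refine add_le_add (le_of_eq ?_) ?_
    · have : ∀ y, (c * ENNReal.ofReal (v y) ^ (1 / q) * L y ^ (1 / p)) ^ q =
          c ^ q * (L y ^ (q / p) * ENNReal.ofReal (v y)) := by
        intro y
        rw [ENNReal.mul_rpow_of_nonneg _ _ hq0.le, ENNReal.mul_rpow_of_nonneg _ _ hq0.le,
          ← ENNReal.rpow_mul, ← ENNReal.rpow_mul, one_div_mul_cancel hq0.ne', ENNReal.rpow_one,
          one_div_mul_eq_div]
        ring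
      simp only [this]
      rw [lintegral_const_mul' _ _ (ENNReal.rpow_ne_top_of_nonneg hq0.le hct),
        ENNReal.mul_rpow_of_nonneg _ _ (by positivity), ← ENNReal.rpow_mul,
        mul_one_div_cancel hq0.ne', ENNReal.rpow_one]
    · rw [hκ, hNq, ← ENNReal.mul_rpow_of_nonneg _ _ (by positivity)]
      refine ENNReal.rpow_le_rpow ?_ (by positivity)
      have : ∀ y, (U y ^ (1 / q) * ∫⁻ x in ball (0 : EuclideanSpace ℝ (Fin N)) ‖y‖, g x) ^ q =
          U y * (∫⁻ x in ball (0 : EuclideanSpace ℝ (Fin N)) ‖y‖, g x) ^ q := by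
        intro y
        rw [ENNReal.mul_rpow_of_nonneg _ _ hq0.le,
          ← ENNReal.rpow_mul, one_div_mul_cancel hq0.ne', ENNReal.rpow_one]
      simp only [this]
      refine hhardy.trans ?_
      gcongr
  have hfinal : Nq ≤ c / (1 - κ) * R ^ (1 / q) := by
    have h1 : Nq * (1 - κ) ≤ c * R ^ (1 / q) := by
      rw [mul_comm, ENNReal.sub_mul (fun _ _ => hNt), one_mul]
      exact tsub_le_iff_right.2 hmain
    rw [← ENNReal.le_div_iff_mul_le (Or.inl hκ0) (Or.inl hκt)] at h1
    refine h1.trans (le_of_eq ?_)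
    rw [div_eq_mul_inv (c * R ^ (1 / q)), div_eq_mul_inv c]; ring
  calc (∫⁻ x, Φ x ^ q) ^ (p / q) = Nq ^ p := by
        rw [hNq, ← ENNReal.rpow_mul, one_div_mul_eq_div]
    _ ≤ (c / (1 - κ) * R ^ (1 / q)) ^ p := ENNReal.rpow_le_rpow hfinal hp0.le
    _ = _ := by
        rw [ENNReal.mul_rpow_of_nonneg _ _ hp0.le, ← ENNReal.rpow_mul R, one_div_mul_eq_div]
end
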